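/- Fix a similarity class type τ (a multiset of pairs (d_i, λ_i) where d_i is a positive integer and λ_i an integer partition) and nonnegative integers a_{i,j} for 1 ≤ i ≤ r, 1 ≤ j ≤ 2. Then there exists a polynomial P with rational coefficients such that for every prime power q for which there exists a linear operator of similarity class type τ on a finite-dimensional F_q-vector space, and for every such operator T, one has |[(a_{1,1},a_{1,2}),…,(a_{r,1},a_{r,2})]_T| = P(q). -/

import Mathlib

/-- The set `(a,b)_T` of subspaces `W` with `dim W = a` and `dim (W ∩ T⁻¹W) = b`. -/
def pairSet {F V : Type*} [Field F] [AddCommGroup V] [Module F V]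
    (T : V →ₗ[F] V) (a b : ℕ) : Set (Submodule F V) :=
  {W | Module.finrank F W = a ∧ Module.finrank F ↥(W ⊓ W.comap T) = b}

/-- The set `[(a₁,₁,a₁,₂),…,(a_r,₁,a_r,₂)]_T`. -/
def tupleSet {F V : Type*} [Field F] [AddCommGroup V] [Module F V]
    (T : V →ₗ[F] V) (r : ℕ) (a : Fin r → ℕ × ℕ) : Set (Fin r → Submodule F V) :=
  {W | (∀ i, W i ∈ pairSet T (a i).1 (a i).2) ∧
    ∀ (i : Fin r) (h : (i : ℕ) + 1 < r),
      W ⟨(i : ℕ) + 1, h⟩ ⊔ (W ⟨(i : ℕ) + 1, h⟩).map T ≤ W i}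

/-- `T` has similarity class type `τ`, where `τ` is a multiset of pairs
`(dᵢ, λᵢ)` with `dᵢ` the degree of a monic irreducible polynomial and `λᵢ` an
integer partition (a multiset of positive parts).  This holds when there is a
finite set `s` of distinct monic irreducible polynomials and partitions `lam p`
for `p ∈ s` such that `τ` is the multiset of pairs `(deg p, lam p)`, every monic
irreducible polynomial outside `s` acts invertibly on `V` (no primary component),
and for `p ∈ s` the `p`-primary elementary divisors of `T` are given by `lam p`;
the latter is recorded by the (characterizing) kernel dimensions
`dim ker p(T)^j = deg p · Σ_{a ∈ lam p} min a j`. -/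
def HasType {F V : Type*} [Field F] [AddCommGroup V] [Module F V]
    (τ : Multiset (ℕ × Multiset ℕ)) (T : V →ₗ[F] V) : Prop :=
  ∃ (s : Finset (Polynomial F)) (lam : Polynomial F → Multiset ℕ),
    (∀ p ∈ s, p.Monic ∧ Irreducible p) ∧
    (∀ p ∈ s, ∀ a ∈ lam p, 0 < a) ∧
    τ = s.val.map (fun p => (p.natDegree, lam p)) ∧
    (∀ p ∈ s, ∀ j : ℕ,
      Module.finrank F ↥(LinearMap.ker (Polynomial.aeval T (p ^ j))) =
        p.natDegree * ((lam p).map (fun a => min a j)).sum) ∧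
    (∀ p : Polynomial F, p.Monic → Irreducible p → p ∉ s →
      LinearMap.ker (Polynomial.aeval T p) = ⊥)

/-!
To a tuple `W` in `[(a₁,₁,a₁,₂),…]_T` add, for each `i`, a subspace `U i` of dimension `c i` with
`W (i + 1) ≤ U i ≤ W i ∩ T⁻¹ (W i)`. The number of pairs `(W, U)` is a sum over `W` of products of
Gaussian binomial coefficients in `δ i = dim (W i ∩ T⁻¹ (W i))`. The matrix of Gaussian binomial
coefficients is unitriangular, so if these sums are polynomials in `q` for all `c`, then so is the
number of tuples `W` with prescribed `δ`.

The pairs `(W, U)` are flags of subspaces `X i` of prescribed dimensions with `T (X i) ≤ X (η i)`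
for a function `η` of the positions. Call the condition on `X i` redundant if it is not vacuous but
is implied by the condition on another member. Take such an `i` of smallest dimension. Either the
number of choices for `X i` depends only on the dimensions, and `X i` can be removed, or `X i` has
to contain the image of exactly one other `X a`, and then counting the choices for `X i` amounts, by
the same inversion, to counting flags in which `X i` is replaced by a smaller subspace `D` of
`X a ∩ T⁻¹ (X u)`, where `u` precedes `i`. The sum of the dimensions decreases, and when no
redundant condition is left the flags consist of `T`-invariant subspaces.

Flags of invariant subspaces are flags of `F[X]`-submodules, which are counted following Hall. For
modules `M`, `N` of given types, `|Hom(M, N)|` is a power of `q`. Sorting the homomorphisms by their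
images gives, by induction on the size, the number of surjections `M → N` and, after division by
`|Aut N|`, the number of submodules of `M` of the type of `N`. The quotient is a polynomial because
a rational function with integer values at infinitely many integers is one.
-/

theorem natCard_eq_sum_fiber {α β : Type*} [Finite α] [Fintype β] (f : α → β) :
    Nat.card α = ∑ b, Nat.card {a // f a = b} := by
  rw [← Nat.card_congr (Equiv.sigmaFiberEquiv f), Nat.card_sigma]

theorem sum_update_lt {κ : Type*} [Fintype κ] [DecidableEq κ] {d : κ → ℕ} {k : κ} {n : ℕ}
    (hn : n < d k) : ∑ l, Function.update d k n l < ∑ l, d l :=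
  Fintype.sum_strictMono (update_lt_self_iff.2 hn)

/-! ### Functions that are polynomials in `q` -/

section PolynomialsIn

open Polynomial

theorem exists_int_mul_eq_map (f : ℚ[X]) :
    ∃ b : ℤ, b ≠ 0 ∧ ∃ g : ℤ[X], g.map (Int.castRingHom ℚ) = C (b : ℚ) * f := by
  obtain ⟨b, hb, hg⟩ := IsLocalization.integerNormalization_spec (nonZeroDivisors ℤ) f
  exact ⟨b, nonZeroDivisors.ne_zero hb, _, hg.trans (by simp)⟩

theorem eq_zero_of_infinite_eval_dvd {D R : ℤ[X]} (hdeg : R.degree < D.degree)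
    (h : {n : ℤ | D.eval n ∣ R.eval n}.Infinite) : R = 0 := by
  refine eq_zero_of_infinite_isRoot R
    ((h.sdiff (finite_abs_eval_le_of_degree_lt hdeg)).mono fun n hn => ?_)
  simp only [Set.mem_sdiff, Set.mem_ofPred_eq, not_le] at hn
  exact Int.eq_zero_of_abs_lt_dvd ((abs_dvd _ _).2 hn.1) hn.2

theorem dvd_of_infinite_eval_eq_mul_intCast {p d : ℚ[X]}
    (h : {n : ℤ | ∃ z : ℤ, p.eval (n : ℚ) = d.eval (n : ℚ) * z}.Infinite) : d ∣ p := by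
  rcases eq_or_ne d 0 with rfl | hd
  · refine zero_dvd_iff.2 (eq_zero_of_infinite_isRoot p ?_)
    refine (h.image (f := ((↑) : ℤ → ℚ)) Int.cast_injective.injOn).mono ?_
    rintro _ ⟨n, ⟨z, hz⟩, rfl⟩
    simpa using hz
  set s := p / d
  set r := p % d
  have hp : d * s + r = p := EuclideanDomain.div_add_mod p d
  obtain ⟨b₁, hb₁, s', hs⟩ := exists_int_mul_eq_map s
  obtain ⟨b₂, hb₂, d', hd'⟩ := exists_int_mul_eq_map d
  obtain ⟨b₃, hb₃, r', hr⟩ := exists_int_mul_eq_map r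
  set D := C b₃ * d'
  set R := C (b₁ * b₂) * r'
  have hD : D.map (Int.castRingHom ℚ) = C ((b₃ * b₂ : ℤ) : ℚ) * d := by
    simp [D, hd', mul_assoc]
  have hR : R.map (Int.castRingHom ℚ) = C ((b₁ * b₂ * b₃ : ℤ) : ℚ) * r := by
    simp [R, hr, mul_assoc]
  have hdeg : R.degree < D.degree := by
    have hc {b : ℤ} (hb : b ≠ 0) (f : ℚ[X]) : (C (b : ℚ) * f).degree = f.degree :=
      degree_C_mul (Int.cast_ne_zero.2 hb)
    have hinj : Function.Injective (Int.castRingHom ℚ) := Int.cast_injective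
    rw [← degree_map_eq_of_injective hinj D, ← degree_map_eq_of_injective hinj R, hD, hR,
      hc (by positivity), hc (by positivity)]
    exact EuclideanDomain.mod_lt p hd
  have eval_map (f : ℤ[X]) (n : ℤ) : (f.map (Int.castRingHom ℚ)).eval (n : ℚ) = f.eval n := by
    simp
  have hR0 : R = 0 := by
    refine eq_zero_of_infinite_eval_dvd hdeg (h.mono ?_)
    rintro n ⟨z, hz⟩
    refine ⟨b₁ * z - s'.eval n, Int.cast_injective (α := ℚ) ?_⟩
    push_cast
    rw [← eval_map, ← eval_map, ← eval_map, hD, hR, hs]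
    rw [← hp] at hz
    simp only [eval_add, eval_mul, eval_C, Int.cast_mul] at hz ⊢
    linear_combination (b₁ * b₂ * b₃ : ℚ) * hz
  have hr₀ : r = 0 := by simpa [hR0, hb₁, hb₂, hb₃] using hR.symm
  exact EuclideanDomain.mod_eq_zero.1 hr₀

variable {Ω : Type*} {q : Ω → ℕ}

/-- The `ℚ`-algebra of the functions `ω ↦ P (q ω)` with `P ∈ ℚ[X]`. Here `ω` runs through a class
of finite structures over finite fields, and `q ω` is the number of elements of the field. -/
noncomputable def polynomialsIn (q : Ω → ℕ) : Subalgebra ℚ (Ω → ℚ) :=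
  (aeval fun ω => (q ω : ℚ)).range

theorem mem_polynomialsIn_iff {f : Ω → ℚ} :
    f ∈ polynomialsIn q ↔ ∃ P : ℚ[X], ∀ ω, f ω = P.eval (q ω : ℚ) := by
  simp only [polynomialsIn, AlgHom.mem_range, funext_iff, aeval_pi_apply₂, coe_aeval_eq_eval,
    eq_comm]

theorem natCast_mem_polynomialsIn : (fun ω => (q ω : ℚ)) ∈ polynomialsIn q :=
  ⟨X, aeval_X _⟩

theorem mem_polynomialsIn_congr {f g : Ω → ℚ} (hf : f ∈ polynomialsIn q) (h : ∀ ω, f ω = g ω) :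
    g ∈ polynomialsIn q :=
  (funext h : f = g) ▸ hf

theorem sum_mem_polynomialsIn {κ : Type*} {s : Finset κ} {f : κ → Ω → ℚ}
    (h : ∀ k ∈ s, f k ∈ polynomialsIn q) : (fun ω => ∑ k ∈ s, f k ω) ∈ polynomialsIn q :=
  mem_polynomialsIn_congr (sum_mem h) fun ω => Finset.sum_apply ω s f

theorem natCast_mem_polynomialsIn_of_mul_mem {D : Ω → ℚ} {N : Ω → ℕ}
    (hD : D ∈ polynomialsIn q) (hD₀ : ∀ ω, D ω ≠ 0)
    (hDN : (fun ω => D ω * N ω) ∈ polynomialsIn q) :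
    (fun ω => (N ω : ℚ)) ∈ polynomialsIn q := by
  rw [mem_polynomialsIn_iff] at *
  obtain ⟨d, hd⟩ := hD
  obtain ⟨p, hp⟩ := hDN
  have hd₀ (ω : Ω) : d.eval (q ω : ℚ) ≠ 0 := hd ω ▸ hD₀ ω
  have hpd (ω : Ω) : p.eval (q ω : ℚ) = d.eval (q ω : ℚ) * N ω := by rw [← hp, ← hd]
  by_cases hfin : (Set.range q).Finite
  · refine ⟨Lagrange.interpolate hfin.toFinset (fun n : ℕ => (n : ℚ))
      (fun n => p.eval (n : ℚ) / d.eval (n : ℚ)), fun ω => ?_⟩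
    rw [Lagrange.eval_interpolate_at_node _ Nat.cast_injective.injOn (by simp), hpd,
      mul_div_cancel_left₀ _ (hd₀ ω)]
  · have hdvd : d ∣ p := by
      refine dvd_of_infinite_eval_eq_mul_intCast
        ((Set.Infinite.image (f := ((↑) : ℕ → ℤ)) Nat.cast_injective.injOn hfin).mono ?_)
      rintro _ ⟨_, ⟨ω, rfl⟩, rfl⟩
      exact ⟨N ω, by simpa using hpd ω⟩
    obtain ⟨s, rfl⟩ := hdvd
    exact ⟨s, fun ω => (mul_left_cancel₀ (hd₀ ω) (by simpa using hpd ω)).symm⟩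

/-- The number of elements of `X ω` is a polynomial in `q ω`. -/
def HasPolynomialCard (q : Ω → ℕ) (X : Ω → Type*) : Prop :=
  (fun ω => (Nat.card (X ω) : ℚ)) ∈ polynomialsIn q

theorem HasPolynomialCard.congr {X Y : Ω → Type*} (hX : HasPolynomialCard q X)
    (e : ∀ ω, X ω ≃ Y ω) : HasPolynomialCard q Y := by
  simpa only [HasPolynomialCard, Nat.card_congr (e _)] using hX

end PolynomialsIn

section SubmoduleFlags

variable {R M N : Type*} [Ring R] [AddCommGroup M] [Module R M] [AddCommGroup N] [Module R N]
  {κ : Type*}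

/-- The families of submodules with `q ^ d k` elements in position `k`, ordered by inclusion in the
same way as the exponents. Positions with equal exponents carry the same submodule. -/
def submoduleFlags (R M : Type*) [Ring R] [AddCommGroup M] [Module R M] (q : ℕ) (d : κ → ℕ) :
    Set (κ → Submodule R M) :=
  {X | (∀ k, Nat.card (X k) = q ^ d k) ∧ ∀ k l, d k ≤ d l → X k ≤ X l}

theorem card_submoduleFlags_congr (e : M ≃ₗ[R] N) (q : ℕ) (d : κ → ℕ) :
    Nat.card (submoduleFlags R M q d) = Nat.card (submoduleFlags R N q d) := by
  refine Nat.card_congr ((Equiv.piCongrRight fun _ =>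
    (Submodule.orderIsoMapComap e).toEquiv).subtypeEquiv fun X => and_congr ?_ ?_)
  · exact forall_congr' fun k => by rw [Nat.card_congr (e.submoduleMap (X k)).toEquiv]; rfl
  · exact forall₂_congr fun k l => imp_congr_right fun _ =>
      ((Submodule.orderIsoMapComap e).le_iff_le).symm

theorem submodule_card_eq_one_iff {W : Submodule R M} : Nat.card W = 1 ↔ W = ⊥ :=
  W.toAddSubgroup.card_eq_one.trans (W.toAddSubgroup_inj ⊥)

theorem submodule_eq_top_of_card_le [Finite M] {W : Submodule R M}
    (h : Nat.card M ≤ Nat.card W) : W = ⊤ :=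
  Submodule.toAddSubgroup_injective (W.toAddSubgroup.eq_top_of_le_card h)

theorem card_submoduleFlags_of_forall_eq_zero (q : ℕ) {d : κ → ℕ} (hd : ∀ k, d k = 0) :
    Nat.card (submoduleFlags R M q d) = 1 := by
  have : submoduleFlags R M q d = {fun _ => ⊥} := by
    ext X
    simp only [submoduleFlags, hd, pow_zero, submodule_card_eq_one_iff, Set.mem_ofPred_eq,
      Set.mem_singleton_iff, funext_iff]
    exact and_iff_left_of_imp fun hX k l _ => ((hX k).trans (hX l).symm).le
  rw [this, Nat.card_unique]

variable {q : ℕ} {d : κ → ℕ}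

theorem submoduleFlags_eq_bot {X : κ → Submodule R M} (hX : X ∈ submoduleFlags R M q d) {k : κ}
    (hk : d k = 0) : X k = ⊥ :=
  submodule_card_eq_one_iff.1 ((hX.1 k).trans (by rw [hk, pow_zero]))

variable [DecidableEq κ] {k : κ} {W : Submodule R M}

theorem comap_update_mem_submoduleFlags {X : κ → Submodule R M} (hX : X ∈ submoduleFlags R M q d)
    (hk : ∀ l, d l ≤ d k) : (fun l => (Function.update X k ⊥ l).comap (X k).subtype) ∈
      submoduleFlags R (X k) q (Function.update d k 0) := by
  have comap_bot : (⊥ : Submodule R M).comap (X k).subtype = ⊥ :=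
    LinearMap.ker_eq_bot.2 (X k).injective_subtype
  constructor
  · intro l
    rcases eq_or_ne l k with rfl | hl
    · simp [comap_bot]
    · simp only [Function.update_of_ne hl, ← hX.1 l]
      exact Nat.card_congr (Submodule.comapSubtypeEquivOfLe (hX.2 l k (hk l))).toEquiv
  · intro l m hlm
    refine Submodule.comap_mono ?_
    rcases eq_or_ne l k with rfl | hl
    · simp
    rcases eq_or_ne m k with rfl | hm
    · simp only [Function.update_self, Function.update_of_ne hl, nonpos_iff_eq_zero] at hlm
      simp [hl, submoduleFlags_eq_bot hX hlm]
    · simp only [Function.update_of_ne, hl, hm, ne_eq, not_false_eq_true] at hlm ⊢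
      exact hX.2 l m hlm

theorem update_map_mem_submoduleFlags [Finite M] {Y : κ → Submodule R W}
    (hk : ∀ l, d l ≤ d k) (hW : Nat.card W = q ^ d k)
    (hY : Y ∈ submoduleFlags R W q (Function.update d k 0)) :
    Function.update (fun l => (Y l).map W.subtype) k W ∈ submoduleFlags R M q d := by
  constructor
  · intro l
    rcases eq_or_ne l k with rfl | hl
    · simp [hW]
    · rw [Function.update_of_ne hl, ← Nat.card_congr (Submodule.equivSubtypeMap W (Y l)).toEquiv]
      simpa [hl] using hY.1 l
  · intro l m hlm
    rcases eq_or_ne m k with rfl | hm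
    · rcases eq_or_ne l m with rfl | hl
      · exact le_rfl
      · simp only [Function.update_self, Function.update_of_ne hl]
        exact W.map_subtype_le (Y l)
    rcases eq_or_ne l k with rfl | hl
    · have hcard : Nat.card (Y m) = Nat.card W := by
        simpa [hm, hW, (hk m).antisymm hlm] using hY.1 m
      simp [hm, submodule_eq_top_of_card_le hcard.ge]
    · simp only [Function.update_of_ne, hl, hm, ne_eq, not_false_eq_true]
      exact Submodule.map_mono (hY.2 l m (by simpa [hl, hm] using hlm))

theorem card_submoduleFlags_fiber [Finite M] (hk : ∀ l, d l ≤ d k) (hW : Nat.card W = q ^ d k) :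
    Nat.card {X : submoduleFlags R M q d // X.1 k = W} =
      Nat.card (submoduleFlags R W q (Function.update d k 0)) := by
  symm
  refine Nat.card_congr (Equiv.ofBijective (fun Y => ⟨⟨_, update_map_mem_submoduleFlags hk hW Y.2⟩,
    by simp⟩) ⟨fun Y Z hYZ => Subtype.ext (funext fun l => ?_), ?_⟩)
  · rcases eq_or_ne l k with rfl | hl
    · rw [submoduleFlags_eq_bot Y.2 (by simp), submoduleFlags_eq_bot Z.2 (by simp)]
    · have := congrFun (congrArg (fun X => X.1.1) hYZ) l
      simp only [Function.update_of_ne hl] at this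
      exact Submodule.map_injective_of_injective W.injective_subtype this
  · rintro ⟨⟨X, hX⟩, rfl⟩
    refine ⟨⟨_, comap_update_mem_submoduleFlags hX hk⟩,
      Subtype.ext (Subtype.ext (funext fun l => ?_))⟩
    rcases eq_or_ne l k with rfl | hl
    · simp
    · simpa [hl, Submodule.map_comap_subtype] using hX.2 l k (hk l)

end SubmoduleFlags

/-! ### Hall's count of submodules -/

section HomCount

variable {R A B C : Type*} [Ring R] [AddCommGroup A] [Module R A] [AddCommGroup B] [Module R B]
  [AddCommGroup C] [Module R C]

/-- The surjective linear maps `A → B`. -/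
def SurjectiveHom (R A B : Type*) [Ring R] [AddCommGroup A] [Module R A] [AddCommGroup B]
    [Module R B] : Type _ :=
  {f : A →ₗ[R] B // Function.Surjective f}

instance [Finite A] [Finite B] : Finite (SurjectiveHom R A B) :=
  have : Finite (A →ₗ[R] B) := DFunLike.finite _
  Subtype.finite

/-- A linear map with range `W` is a surjection onto `W`. -/
def rangeEqEquivSurjectiveHom (W : Submodule R B) :
    {f : A →ₗ[R] B // LinearMap.range f = W} ≃ SurjectiveHom R A W where
  toFun f := ⟨f.1.codRestrict W fun a => f.2.le (LinearMap.mem_range_self f.1 a), by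
    rw [← LinearMap.range_eq_top, LinearMap.range_codRestrict, f.2, Submodule.comap_subtype_self]⟩
  invFun g := ⟨W.subtype ∘ₗ g.1, by
    rw [LinearMap.range_comp_of_range_eq_top _ (LinearMap.range_eq_top.2 g.2), W.range_subtype]⟩
  left_inv _ := rfl
  right_inv _ := rfl

/-- Surjections onto isomorphic modules correspond. -/
def SurjectiveHom.congrRight (e : B ≃ₗ[R] C) : SurjectiveHom R A B ≃ SurjectiveHom R A C where
  toFun f := ⟨e.toLinearMap ∘ₗ f.1, e.surjective.comp f.2⟩
  invFun f := ⟨e.symm.toLinearMap ∘ₗ f.1, e.symm.surjective.comp f.2⟩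
  left_inv f := Subtype.ext (by ext; simp)
  right_inv f := Subtype.ext (by ext; simp)

theorem card_linearMap_eq_sum [Finite A] [Finite B] [Fintype (Submodule R B)] :
    Nat.card (A →ₗ[R] B) = ∑ W : Submodule R B, Nat.card (SurjectiveHom R A W) := by
  have : Finite (A →ₗ[R] B) := DFunLike.finite _
  rw [natCard_eq_sum_fiber fun f : A →ₗ[R] B => LinearMap.range f]
  exact Finset.sum_congr rfl fun W _ => Nat.card_congr (rangeEqEquivSurjectiveHom W)

end HomCount

section HallFamily

variable {Ω ι : Type*} {q : Ω → ℕ} {R : Ω → Type*} [∀ ω, Ring (R ω)] {M : Ω → ι → Type*}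
  [∀ ω i, AddCommGroup (M ω i)] [∀ ω i, Module (R ω) (M ω i)] {size : ι → ℕ}

/-- A family of finite modules `M ω i`, where `ω` stands for the ground ring and `i` describes the
isomorphism class, to which Hall's method of counting submodules applies: the modules of a given
`ω` are closed under submodules and pairwise non-isomorphic, and the numbers of homomorphisms
between them are polynomials in `q`. -/
structure IsHallFamily (q : Ω → ℕ) (R : Ω → Type*) [∀ ω, Ring (R ω)] (M : Ω → ι → Type*)
    [∀ ω i, AddCommGroup (M ω i)] [∀ ω i, Module (R ω) (M ω i)] (size : ι → ℕ) : Prop where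
  one_lt : ∀ ω, 1 < q ω
  card_eq : ∀ ω i, Nat.card (M ω i) = q ω ^ size i
  finite_size_le : ∀ n, {i | size i ≤ n}.Finite
  existsUnique_equiv : ∀ ω i (W : Submodule (R ω) (M ω i)), ∃! j, Nonempty (M ω j ≃ₗ[R ω] W)
  linearMap : ∀ i j, HasPolynomialCard q fun ω => M ω i →ₗ[R ω] M ω j

namespace IsHallFamily

variable (h : IsHallFamily q R M size)
include h

theorem finite (ω : Ω) (i : ι) : Finite (M ω i) :=
  Nat.finite_of_card_ne_zero (h.card_eq ω i ▸ (Nat.pow_pos (h.one_lt ω).le).ne')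

theorem eq_of_equiv {ω : Ω} {i j : ι} (e : M ω i ≃ₗ[R ω] M ω j) : i = j :=
  (h.existsUnique_equiv ω j ⊤).unique ⟨e.trans Submodule.topEquiv.symm⟩
    ⟨Submodule.topEquiv.symm⟩

/-- The type of a submodule of a module of the family. -/
noncomputable def typeOf {ω : Ω} {i : ι} (W : Submodule (R ω) (M ω i)) : ι :=
  (h.existsUnique_equiv ω i W).choose

variable {ω : Ω} {i j : ι}

theorem typeOf_eq_iff {W : Submodule (R ω) (M ω i)} :
    h.typeOf W = j ↔ Nonempty (M ω j ≃ₗ[R ω] W) :=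
  have hW := h.existsUnique_equiv ω i W
  ⟨fun hj => hj ▸ hW.choose_spec.1, fun hj => (hW.choose_spec.2 _ hj).symm⟩

/-- A submodule is isomorphic to the module of the family with the same type. -/
noncomputable def typeOfEquiv (W : Submodule (R ω) (M ω i)) : M ω (h.typeOf W) ≃ₗ[R ω] W :=
  (h.typeOf_eq_iff.1 rfl).some

theorem card_submodule_eq (W : Submodule (R ω) (M ω i)) :
    Nat.card W = q ω ^ size (h.typeOf W) := by
  rw [← h.card_eq, Nat.card_congr (h.typeOfEquiv W).toEquiv]

theorem eq_of_surjective {f : M ω i →ₗ[R ω] M ω j} (hf : Function.Surjective f)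
    (hij : size i ≤ size j) : i = j := by
  have := h.finite ω i
  have hbij : Function.Bijective f := hf.bijective_of_nat_card_le
    (by simpa only [h.card_eq] using Nat.pow_le_pow_right (h.one_lt ω).le hij)
  exact h.eq_of_equiv (LinearEquiv.ofBijective f hbij)

theorem eq_top_of_size_le_size_typeOf {W : Submodule (R ω) (M ω i)}
    (hW : size i ≤ size (h.typeOf W)) : W = ⊤ := by
  have := h.finite ω i
  refine submodule_eq_top_of_card_le ?_
  rw [h.card_eq, h.card_submodule_eq]
  exact Nat.pow_le_pow_right (h.one_lt ω).le hW

theorem typeOf_eq_of_size_le {W : Submodule (R ω) (M ω i)}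
    (hW : size i ≤ size (h.typeOf W)) : h.typeOf W = i :=
  h.typeOf_eq_iff.2 (h.eq_top_of_size_le_size_typeOf hW ▸ ⟨Submodule.topEquiv.symm⟩)

theorem card_typeOf_eq_self : Nat.card {W : Submodule (R ω) (M ω i) // h.typeOf W = i} = 1 := by
  rw [Nat.card_eq_one_iff_unique]
  refine ⟨⟨fun W W' => Subtype.ext ?_⟩, ⟨⊤, h.typeOf_eq_iff.2 ⟨Submodule.topEquiv.symm⟩⟩⟩
  rw [h.eq_top_of_size_le_size_typeOf (congrArg size W.2).ge,
    h.eq_top_of_size_le_size_typeOf (congrArg size W'.2).ge]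

theorem card_surjectiveHom_typeOf {k : ι} (W : Submodule (R ω) (M ω i)) :
    Nat.card (SurjectiveHom (R ω) (M ω k) W) =
      Nat.card (SurjectiveHom (R ω) (M ω k) (M ω (h.typeOf W))) :=
  Nat.card_congr (SurjectiveHom.congrRight (h.typeOfEquiv W).symm)

theorem sum_typeOf [Fintype (Submodule (R ω) (M ω i))] (G : ι → ℕ) (s : Finset ι)
    (hs : ∀ W : Submodule (R ω) (M ω i), h.typeOf W ∉ s → G (h.typeOf W) = 0) :
    ∑ W : Submodule (R ω) (M ω i), G (h.typeOf W) =
      ∑ j ∈ s, Nat.card {W : Submodule (R ω) (M ω i) // h.typeOf W = j} * G j := by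
  classical
  rw [← Finset.sum_filter_of_ne fun W _ => not_imp_comm.1 (hs W),
    ← Finset.sum_fiberwise_of_maps_to (t := s) (g := h.typeOf)
      fun W hW => (Finset.mem_filter.1 hW).2]
  refine Finset.sum_congr rfl fun j hj => ?_
  rw [Finset.filter_filter, Finset.filter_congr (q := fun W => h.typeOf W = j)
      fun W _ => and_iff_right_of_imp fun hW => hW ▸ hj,
    Finset.sum_congr rfl (g := fun _ => G j) fun W hW => by rw [(Finset.mem_filter.1 hW).2],
    Finset.sum_const, smul_eq_mul, ← Fintype.card_subtype, Nat.card_eq_fintype_card]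

/-- The finitely many types of size less than `n`. -/
noncomputable def typesBelow (n : ℕ) : Finset ι :=
  (show {i | size i < n}.Finite from
    (h.finite_size_le n).subset fun i (hi : size i < n) => hi.le).toFinset

theorem mem_typesBelow {n : ℕ} : i ∈ h.typesBelow n ↔ size i < n := by
  simp only [typesBelow, Set.Finite.mem_toFinset, Set.mem_ofPred_eq]

theorem card_linearMap_eq_add (ω : Ω) {k : ι} (hk : k = i ∨ k = j) :
    Nat.card (M ω i →ₗ[R ω] M ω j) =
      Nat.card {W : Submodule (R ω) (M ω j) // h.typeOf W = k} *
        Nat.card (SurjectiveHom (R ω) (M ω i) (M ω k)) +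
      ∑ l ∈ h.typesBelow (size k), Nat.card {W : Submodule (R ω) (M ω j) // h.typeOf W = l} *
        Nat.card (SurjectiveHom (R ω) (M ω i) (M ω l)) := by
  classical
  have := h.finite ω i
  have := h.finite ω j
  have := Fintype.ofFinite (Submodule (R ω) (M ω j))
  rw [card_linearMap_eq_sum, Finset.sum_congr rfl fun W _ => h.card_surjectiveHom_typeOf W,
    h.sum_typeOf (fun l => Nat.card (SurjectiveHom (R ω) (M ω i) (M ω l)))
      (insert k (h.typesBelow (size k))), Finset.sum_insert (by simp [mem_typesBelow])]
  intro W hW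
  simp only [Finset.mem_insert, mem_typesBelow, not_or, not_lt] at hW
  rcases hk with rfl | rfl
  · exact Nat.card_eq_zero.2 (.inl ⟨fun f => hW.1 (h.eq_of_surjective f.2 hW.2).symm⟩)
  · exact (hW.1 (h.typeOf_eq_of_size_le hW.2)).elim

/-- Induction on the size of `i`. In `card_linearMap_eq_add`, taking `k = j` gives the number of
surjections onto `M ω i`, and `k = i` gives the number of submodules of type `i` times the number
of automorphisms of `M ω i`. -/
theorem hasPolynomialCard_surjectiveHom_and_submodule (i j : ι) :
    HasPolynomialCard q (fun ω => SurjectiveHom (R ω) (M ω j) (M ω i)) ∧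
      HasPolynomialCard q fun ω => {W : Submodule (R ω) (M ω j) // h.typeOf W = i} := by
  induction hn : size i using Nat.strong_induction_on generalizing i j with
  | _ n ih =>
  have lower_terms (a b : ι) : (fun ω => ∑ l ∈ h.typesBelow (size i),
      (Nat.card {W : Submodule (R ω) (M ω b) // h.typeOf W = l} : ℚ) *
        Nat.card (SurjectiveHom (R ω) (M ω a) (M ω l))) ∈ polynomialsIn q :=
    sum_mem_polynomialsIn fun l hl =>
      have hl := hn ▸ h.mem_typesBelow.1 hl
      mul_mem (ih _ hl l b rfl).2 (ih _ hl l a rfl).1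
  have surjectiveHom (j : ι) :
      HasPolynomialCard q fun ω => SurjectiveHom (R ω) (M ω j) (M ω i) := by
    refine mem_polynomialsIn_congr (sub_mem (h.linearMap j i) (lower_terms j i)) fun ω => ?_
    simp [h.card_linearMap_eq_add ω (.inr rfl), h.card_typeOf_eq_self]
  refine ⟨surjectiveHom j, natCast_mem_polynomialsIn_of_mul_mem (surjectiveHom i) (fun ω => ?_)
    (mem_polynomialsIn_congr (sub_mem (h.linearMap i j) (lower_terms i j)) fun ω => ?_)⟩
  · have := h.finite ω i
    have : Nonempty (SurjectiveHom (R ω) (M ω i) (M ω i)) := ⟨.id, Function.surjective_id⟩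
    exact Nat.cast_ne_zero.2 Nat.card_pos.ne'
  · simp [h.card_linearMap_eq_add ω (.inl rfl), mul_comm]

theorem hasPolynomialCard_submodule (i j : ι) :
    HasPolynomialCard q fun ω => {W : Submodule (R ω) (M ω j) // h.typeOf W = i} :=
  (h.hasPolynomialCard_surjectiveHom_and_submodule i j).2

theorem card_submoduleFlags_eq_sum {κ : Type*} [Finite κ] [DecidableEq κ] {d : κ → ℕ} {k : κ}
    (hk : ∀ l, d l ≤ d k) (ω : Ω) (i : ι) :
    Nat.card (submoduleFlags (R ω) (M ω i) (q ω) d) =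
      ∑ j ∈ (h.typesBelow (d k + 1)).filter (size · = d k),
        Nat.card {W : Submodule (R ω) (M ω i) // h.typeOf W = j} *
          Nat.card (submoduleFlags (R ω) (M ω j) (q ω) (Function.update d k 0)) := by
  have := h.finite ω i
  have := Fintype.ofFinite (Submodule (R ω) (M ω i))
  let G (j : ι) : ℕ := if size j = d k then
    Nat.card (submoduleFlags (R ω) (M ω j) (q ω) (Function.update d k 0)) else 0
  have card_fiber (W : Submodule (R ω) (M ω i)) :
      Nat.card {X : submoduleFlags (R ω) (M ω i) (q ω) d // X.1 k = W} = G (h.typeOf W) := by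
    simp only [G]
    split_ifs with hW
    · rw [card_submoduleFlags_fiber hk (by rw [h.card_submodule_eq, hW]),
        card_submoduleFlags_congr (h.typeOfEquiv W)]
    · refine Nat.card_eq_zero.2 (.inl ⟨fun X => hW ?_⟩)
      refine Nat.pow_right_injective (h.one_lt ω) ?_
      simp only [← h.card_submodule_eq, ← X.1.2.1 k, X.2]
  rw [natCard_eq_sum_fiber fun X : submoduleFlags (R ω) (M ω i) (q ω) d => X.1 k,
    Finset.sum_congr rfl fun W _ => card_fiber W,
    h.sum_typeOf G ((h.typesBelow (d k + 1)).filter (size · = d k))]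
  · exact Finset.sum_congr rfl fun j hj => by simp only [G, (Finset.mem_filter.1 hj).2, if_true]
  · refine fun W hW => if_neg fun hsize => hW ?_
    exact Finset.mem_filter.2 ⟨h.mem_typesBelow.2 (by omega), hsize⟩

/-- Counting by the largest member of the flag. -/
theorem hasPolynomialCard_submoduleFlags {κ : Type*} [Finite κ] (d : κ → ℕ) (i : ι) :
    HasPolynomialCard q fun ω => submoduleFlags (R ω) (M ω i) (q ω) d := by
  classical
  have := Fintype.ofFinite κ
  induction hn : ∑ k, d k using Nat.strong_induction_on generalizing d i with
  | _ n ih =>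
  by_cases hd : ∀ k, d k = 0
  · simp only [HasPolynomialCard, card_submoduleFlags_of_forall_eq_zero _ hd, Nat.cast_one]
    exact one_mem _
  push Not at hd
  obtain ⟨k₀, hk₀⟩ := hd
  have : Nonempty κ := ⟨k₀⟩
  obtain ⟨k, hk⟩ := Finite.exists_max d
  have hlt : ∑ l, Function.update d k 0 l < n := hn ▸ sum_update_lt (by have := hk k₀; omega)
  refine mem_polynomialsIn_congr (sum_mem_polynomialsIn
    (s := (h.typesBelow (d k + 1)).filter (size · = d k)) fun j _ =>
      mul_mem (h.hasPolynomialCard_submodule j i) (ih _ hlt _ j rfl)) fun ω => ?_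
  rw [h.card_submoduleFlags_eq_sum hk]
  push_cast
  rfl

end IsHallFamily

end HallFamily

/-! ### Gaussian binomial coefficients -/

section GaussBinom

open Module

/-- The Gaussian binomial coefficient, as the number of `k`-dimensional subspaces of `F ^ n`. -/
noncomputable def gaussBinom (F : Type*) [Field F] (n k : ℕ) : ℕ :=
  Nat.card {W : Submodule F (Fin n → F) // finrank F W = k}

section Interval

variable {F V : Type*} [Field F] [AddCommGroup V] [Module F V] [FiniteDimensional F V]

theorem card_submodule_finrank_eq (k : ℕ) :
    Nat.card {W : Submodule F V // finrank F W = k} = gaussBinom F (finrank F V) k := by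
  have e : V ≃ₗ[F] (Fin (finrank F V) → F) := LinearEquiv.ofFinrankEq _ _ (by simp)
  refine Nat.card_congr ((Submodule.orderIsoMapComap e).toEquiv.subtypeEquiv fun W => ?_)
  exact (e.finrank_map_eq W).symm ▸ Iff.rfl

theorem gaussBinom_self (n : ℕ) : gaussBinom F n n = 1 := by
  rw [gaussBinom, Nat.card_eq_one_iff_unique]
  refine ⟨⟨fun W W' => Subtype.ext ?_⟩, ⟨⊤, by simp⟩⟩
  rw [Submodule.eq_top_of_finrank_eq (W.2.trans (finrank_fin_fun F).symm),
    Submodule.eq_top_of_finrank_eq (W'.2.trans (finrank_fin_fun F).symm)]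

theorem gaussBinom_eq_zero_of_lt {n k : ℕ} (h : n < k) : gaussBinom F n k = 0 := by
  have : IsEmpty {W : Submodule F (Fin n → F) // finrank F W = k} :=
    ⟨fun W => (W.1.finrank_le.trans_lt ((finrank_fin_fun F).trans_lt h)).ne W.2⟩
  exact Nat.card_of_isEmpty

theorem finrank_comap_mkQ (P : Submodule F V) (W : Submodule F (V ⧸ P)) :
    finrank F (W.comap P.mkQ) = finrank F W + finrank F P := by
  have h := LinearMap.finrank_range_add_finrank_ker (P.mkQ.domRestrict (W.comap P.mkQ))
  rw [LinearMap.range_domRestrict, LinearMap.ker_domRestrict, Submodule.ker_mkQ,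
    Submodule.map_comap_eq_of_surjective P.mkQ_surjective,
    (Submodule.comapSubtypeEquivOfLe (P.le_comap_mkQ W)).finrank_eq] at h
  exact h.symm

theorem card_submodule_ge {P : Submodule F V} {d : ℕ} (hd : finrank F P ≤ d) :
    Nat.card {D : Submodule F V // P ≤ D ∧ finrank F D = d} =
      gaussBinom F (finrank F V - finrank F P) (d - finrank F P) := by
  rw [← P.finrank_quotient, ← card_submodule_finrank_eq]
  let e := (Submodule.comapMkQRelIso P).toEquiv
  refine Nat.card_congr ((e.subtypeEquiv (q := fun D => finrank F D.1 = d) fun W => ?_).trans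
    (Equiv.subtypeSubtypeEquivSubtypeInter (· ∈ Set.Ici P) fun D => finrank F D = d)).symm
  change _ ↔ finrank F (W.comap P.mkQ) = d
  rw [finrank_comap_mkQ]
  lia

theorem card_submodule_Icc {P Q : Submodule F V} (hPQ : P ≤ Q) {d : ℕ} (hd : finrank F P ≤ d) :
    Nat.card {D : Submodule F V // P ≤ D ∧ D ≤ Q ∧ finrank F D = d} =
      gaussBinom F (finrank F Q - finrank F P) (d - finrank F P) := by
  have hP : finrank F (P.submoduleOf Q) = finrank F P :=
    (Submodule.submoduleOfEquivOfLe hPQ).finrank_eq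
  rw [← hP, ← card_submodule_ge (hP.trans_le hd)]
  let e := (Submodule.mapIic Q).toEquiv
  let p (D : Submodule F V) := P ≤ D ∧ finrank F D = d
  refine Nat.card_congr ((e.subtypeEquiv (q := fun D => p D.1) fun D => ?_).trans
    ((Equiv.subtypeSubtypeEquivSubtypeInter (· ∈ Set.Iic Q) p).trans
      (Equiv.subtypeEquivRight fun D => and_left_comm))).symm
  change _ ↔ P ≤ D.map Q.subtype ∧ finrank F (D.map Q.subtype) = d
  rw [Submodule.finrank_map_subtype_eq, Submodule.submoduleOf]
  refine and_congr_left' ⟨fun h => ?_, fun h x hx => ?_⟩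
  · simpa [hPQ] using Submodule.map_mono (f := Q.subtype) h
  · simpa [x.2] using h hx

end Interval

section Polynomiality

variable {Ω : Type*} (F : Ω → Type*) [∀ ω, Field (F ω)] [∀ ω, Finite (F ω)]

theorem isHallFamily_finFunction :
    IsHallFamily (fun ω => Nat.card (F ω)) F (fun ω n => Fin n → F ω) id where
  one_lt ω := Finite.one_lt_card
  card_eq ω n := by rw [natCard_eq_pow_finrank (K := F ω), finrank_fin_fun, id]
  finite_size_le := Set.finite_Iic
  existsUnique_equiv ω n W := by
    refine ⟨finrank (F ω) W, ⟨LinearEquiv.ofFinrankEq _ _ (by simp)⟩, fun j => ?_⟩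
    rintro ⟨e⟩
    simpa using e.finrank_eq
  linearMap m n := by
    refine mem_polynomialsIn_congr (pow_mem natCast_mem_polynomialsIn (m * n)) fun ω => ?_
    rw [natCard_eq_pow_finrank (K := F ω), finrank_linearMap]
    simp

theorem gaussBinom_mem_polynomialsIn (n k : ℕ) :
    (fun ω => (gaussBinom (F ω) n k : ℚ)) ∈ polynomialsIn fun ω => Nat.card (F ω) := by
  have h := isHallFamily_finFunction F
  refine (h.hasPolynomialCard_submodule k n).congr fun ω => Equiv.subtypeEquivRight fun W => ?_
  rw [h.typeOf_eq_iff]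
  exact ⟨fun ⟨e⟩ => by simpa using e.finrank_eq.symm,
    fun hW => ⟨LinearEquiv.ofFinrankEq _ _ (by simpa using hW.symm)⟩⟩

/-- Any function of `φ ≤ m` is a linear combination of the functions `φ ↦ gaussBinom φ k`, because
the matrix of the Gaussian binomial coefficients is unitriangular. -/
theorem exists_eq_sum_mul_gaussBinom {g : ℕ → Ω → ℚ}
    (hg : ∀ φ, g φ ∈ polynomialsIn fun ω => Nat.card (F ω)) (m : ℕ) :
    ∃ c : ℕ → Ω → ℚ, (∀ k, c k ∈ polynomialsIn fun ω => Nat.card (F ω)) ∧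
      ∀ φ < m, ∀ ω, g φ ω = ∑ k ∈ Finset.range m, c k ω * gaussBinom (F ω) φ k := by
  induction m with
  | zero => exact ⟨0, fun _ => zero_mem _, by simp⟩
  | succ m ih =>
    obtain ⟨c, hc, hgc⟩ := ih
    refine ⟨Function.update c m fun ω =>
      g m ω - ∑ k ∈ Finset.range m, c k ω * gaussBinom (F ω) m k, fun k => ?_, fun φ hφ ω => ?_⟩
    · rcases eq_or_ne k m with rfl | hk
      · rw [Function.update_self]
        exact sub_mem (hg k) (sum_mem_polynomialsIn fun l _ =>
          mul_mem (hc l) (gaussBinom_mem_polynomialsIn F k l))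
      · rw [Function.update_of_ne hk]
        exact hc k
    · have hcoeff : ∀ k ∈ Finset.range m, Function.update c m (fun ω =>
          g m ω - ∑ k ∈ Finset.range m, c k ω * gaussBinom (F ω) m k) k = c k := fun k hk =>
        Function.update_of_ne (Finset.mem_range.1 hk).ne _ _
      rw [Finset.sum_range_succ, Function.update_self,
        Finset.sum_congr rfl fun k hk => by rw [hcoeff k hk]]
      rcases (Nat.lt_succ_iff.1 hφ).eq_or_lt with rfl | hφ
      · rw [gaussBinom_self]
        ring
      · rw [gaussBinom_eq_zero_of_lt hφ, ← hgc φ hφ]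
        ring

theorem sum_prod_mem_polynomialsIn {κ : Type*} [Fintype κ] {S : Ω → Type*}
    [∀ ω, Fintype (S ω)] {φ : ∀ ω, S ω → κ → ℕ} {m : κ → ℕ} (hφ : ∀ ω x i, φ ω x i < m i)
    (h : ∀ k : κ → ℕ, (∀ i, k i < m i) →
      (fun ω => ∑ x, ∏ i, (gaussBinom (F ω) (φ ω x i) (k i) : ℚ)) ∈
        polynomialsIn fun ω => Nat.card (F ω)) {g : κ → ℕ → Ω → ℚ}
    (hg : ∀ i n, g i n ∈ polynomialsIn fun ω => Nat.card (F ω)) :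
    (fun ω => ∑ x, ∏ i, g i (φ ω x i) ω) ∈ polynomialsIn fun ω => Nat.card (F ω) := by
  classical
  choose c hc hgc using fun i => exists_eq_sum_mul_gaussBinom F (hg i) (m i)
  refine mem_polynomialsIn_congr (f := fun ω =>
    ∑ k ∈ Fintype.piFinset fun i => Finset.range (m i),
      (∏ i, c i (k i) ω) * ∑ x, ∏ i, (gaussBinom (F ω) (φ ω x i) (k i) : ℚ)) ?_ fun ω => ?_
  · refine sum_mem_polynomialsIn fun k hk => mul_mem ?_ (h k (by simpa using hk))
    exact mem_polynomialsIn_congr (prod_mem fun i _ => hc i (k i)) fun ω =>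
      Finset.prod_apply ω _ fun i => c i (k i)
  · simp only [Finset.mul_sum, ← Finset.prod_mul_distrib]
    rw [Finset.sum_comm]
    refine Finset.sum_congr rfl fun x _ => ?_
    rw [← Finset.prod_univ_sum (fun i => Finset.range (m i))
      fun i j => c i j ω * (gaussBinom (F ω) (φ ω x i) j : ℚ)]
    exact Finset.prod_congr rfl fun i _ => (hgc i _ (hφ ω x i) ω).symm

end Polynomiality

end GaussBinom

/-! ### Hessenberg flags -/

section HessenbergFlags

open Module Function

variable {F V ι : Type*} [Field F] [AddCommGroup V] [Module F V]

/-- The flags of subspaces `X i` of dimension `d i` with `T (X i) ⊆ X (η i)`. Positions with equal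
dimensions carry the same subspace. -/
def hessenbergFlags (T : V →ₗ[F] V) (d : ι → ℕ) (η : ι → ι) : Set (ι → Submodule F V) :=
  {X | (∀ i, finrank F (X i) = d i) ∧ (∀ i j, d i ≤ d j → X i ≤ X j) ∧ ∀ i, (X i).map T ≤ X (η i)}

/-- In the sequence of dimensions `d`, no position other than `i` lies strictly between `u` and `v`,
and `i` does lie between them. -/
structure IsGap (d : ι → ℕ) (i u v : ι) : Prop where
  left_ne : u ≠ i
  right_ne : v ≠ i
  left_le : d u ≤ d i
  le_right : d i ≤ d v
  le_or_le : ∀ t ≠ i, d t ≤ d u ∨ d v ≤ d t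

/-- The subspaces that can be inserted in position `i`, between the positions `u` and `v`, of a
Hessenberg flag `Y`. -/
def insertions (T : V →ₗ[F] V) (d : ι → ℕ) (η : ι → ι) (i u v : ι) (Y : ι → Submodule F V) :
    Set (Submodule F V) :=
  {D | Y u ≤ D ∧ D ≤ Y v ∧ finrank F D = d i ∧ (∀ s ≠ i, η s = i → (Y s).map T ≤ D) ∧
    D.map T ≤ Y (η i)}

/-- The function that agrees with `η` except that it takes the value `v` where `η` is `i`. -/
def redirect [DecidableEq ι] (η : ι → ι) (i v : ι) (s : ι) : ι :=
  if η s = i then v else η s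

section Insertion

variable {T : V →ₗ[F] V} {d : ι → ℕ} {η η₀ : ι → ι} {i u v : ι}
  {X : ι → Submodule F V}

theorem eq_bot_of_mem_hessenbergFlags [FiniteDimensional F V] (hX : X ∈ hessenbergFlags T d η)
    (hi : d i = 0) : X i = ⊥ :=
  Submodule.finrank_eq_zero.1 ((hX.1 i).trans hi)

theorem hessenbergFlags_eq_id [FiniteDimensional F V] (h : ∀ i, d i ≤ d (η i))
    (h' : ∀ i, d i = 0 ∨ d (η i) ≤ d i) :
    hessenbergFlags T d η = hessenbergFlags T d id := by
  ext X
  refine and_congr_right fun hd => and_congr_right fun hX => forall_congr' fun i => ?_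
  rcases h' i with hi | hi
  · simp [Submodule.finrank_eq_zero.1 ((hd i).trans hi)]
  · rw [id, (hX i _ (h i)).antisymm (hX _ i hi)]

variable [DecidableEq ι]

theorem mem_insertions_update (hgap : IsGap d i u v) (hi : η i ≠ i)
    (hX : X ∈ hessenbergFlags T d η) : X i ∈ insertions T d η i u v (update X i ⊥) := by
  refine ⟨?_, ?_, hX.1 i, fun s hs h => ?_, ?_⟩
  · simpa [hgap.left_ne] using hX.2.1 u i hgap.left_le
  · simpa [hgap.right_ne] using hX.2.1 i v hgap.le_right
  · simpa [hs, h] using hX.2.2 s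
  · simpa [hi] using hX.2.2 i

variable [FiniteDimensional F V]

theorem update_bot_mem_hessenbergFlags (hv : v ≠ i) (hiv : d i ≤ d v)
    (hη : ∀ s ≠ i, η₀ s = redirect η i v s) (hX : X ∈ hessenbergFlags T d η) :
    update X i ⊥ ∈ hessenbergFlags T (update d i 0) η₀ := by
  have hη₀ {s : ι} (hs : s ≠ i) : η₀ s ≠ i := by
    rw [hη s hs, redirect]
    split_ifs with h
    exacts [hv, h]
  refine ⟨fun s => ?_, fun s t hst => ?_, fun s => ?_⟩
  · rcases eq_or_ne s i with rfl | hs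
    · rw [update_self, update_self, finrank_bot]
    · rw [update_of_ne hs, update_of_ne hs, hX.1 s]
  · rcases eq_or_ne s i with rfl | hs
    · simp
    rcases eq_or_ne t i with rfl | ht
    · have : d s = 0 := by simpa [hs] using hst
      simp [hs, eq_bot_of_mem_hessenbergFlags hX this]
    · simp only [ne_eq, hs, ht, not_false_eq_true, update_of_ne] at hst ⊢
      exact hX.2.1 s t hst
  · rcases eq_or_ne s i with rfl | hs
    · simp
    rw [update_of_ne hs, update_of_ne (hη₀ hs), hη s hs, redirect]
    split_ifs with h
    · exact (h ▸ hX.2.2 s).trans (hX.2.1 i v hiv)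
    · exact hX.2.2 s

theorem IsGap.update_le_update {Y : ι → Submodule F V} {D : Submodule F V} (hgap : IsGap d i u v)
    (hdimY : ∀ s ≠ i, finrank F (Y s) = d s)
    (hmono : ∀ s ≠ i, ∀ t ≠ i, d s ≤ d t → Y s ≤ Y t) (huD : Y u ≤ D) (hDv : D ≤ Y v)
    (hdim : finrank F D = d i) {s t : ι} (hst : d s ≤ d t) : update Y i D s ≤ update Y i D t := by
  have hu := hgap.left_ne
  have hv := hgap.right_ne
  rcases eq_or_ne s i with rfl | hs
  · rcases eq_or_ne t s with rfl | ht
    · exact le_rfl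
    rw [update_self, update_of_ne ht]
    rcases hgap.le_or_le t ht with h | h
    · rw [← Submodule.eq_of_le_of_finrank_le huD
        ((hdim.trans_le (hst.trans h)).trans (hdimY u hu).ge)]
      exact hmono u hu t ht (hgap.left_le.trans hst)
    · exact hDv.trans (hmono v hv t ht h)
  rcases eq_or_ne t i with rfl | ht
  · rw [update_self, update_of_ne hs]
    rcases hgap.le_or_le s hs with h | h
    · exact (hmono s hs u hu h).trans huD
    · rw [Submodule.eq_of_le_of_finrank_le hDv
        (((hdimY v hv).trans_le (h.trans hst)).trans hdim.ge)]
      exact hmono s hs v hv (hst.trans hgap.le_right)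
  · simpa [hs, ht] using hmono s hs t ht hst

theorem update_mem_hessenbergFlags {Y : ι → Submodule F V} {D : Submodule F V}
    (hgap : IsGap d i u v) (hi : η i ≠ i) (hη : ∀ s ≠ i, η₀ s = redirect η i v s)
    (hY : Y ∈ hessenbergFlags T (update d i 0) η₀) (hD : D ∈ insertions T d η i u v Y) :
    update Y i D ∈ hessenbergFlags T d η := by
  obtain ⟨huD, hDv, hdim, hTD, hDT⟩ := hD
  have hdimY (s : ι) (hs : s ≠ i) : finrank F (Y s) = d s := by rw [hY.1, update_of_ne hs]
  refine ⟨fun s => ?_, fun s t => hgap.update_le_update hdimY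
    (fun s hs t ht h => hY.2.1 s t (by simpa [hs, ht] using h)) huD hDv hdim, fun s => ?_⟩
  · rcases eq_or_ne s i with rfl | hs
    · rw [update_self, hdim]
    · rw [update_of_ne hs, hdimY s hs]
  · rcases eq_or_ne s i with rfl | hs
    · simpa [hi] using hDT
    rw [update_of_ne hs]
    by_cases h : η s = i
    · simpa [h] using hTD s hs h
    · simpa [h, hη s hs, redirect] using hY.2.2 s

theorem card_hessenbergFlags_eq_sum [Finite V] (hgap : IsGap d i u v) (hi : η i ≠ i)
    {d₀ : ι → ℕ} (hd₀ : d₀ = update d i 0) (hη : ∀ s ≠ i, η₀ s = redirect η i v s)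
    [Fintype (hessenbergFlags T d₀ η₀)] :
    Nat.card (hessenbergFlags T d η) =
      ∑ Y : hessenbergFlags T d₀ η₀, Nat.card (insertions T d η i u v Y) := by
  subst hd₀
  rw [← Nat.card_sigma]
  refine Nat.card_congr
    { toFun X := ⟨⟨_, update_bot_mem_hessenbergFlags hgap.right_ne hgap.le_right hη X.2⟩,
        ⟨_, mem_insertions_update hgap hi X.2⟩⟩
      invFun Z := ⟨_, update_mem_hessenbergFlags hgap hi hη Z.1.2 Z.2.2⟩
      left_inv X := Subtype.ext (by simp)
      right_inv := ?_ }
  rintro ⟨⟨Y, hY⟩, ⟨D, hD⟩⟩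
  have hYi : Y i = ⊥ := eq_bot_of_mem_hessenbergFlags hY (update_self _ _ _)
  have : update (update Y i D) i ⊥ = Y := by rw [update_idem, ← hYi, update_eq_self]
  ext <;> simp [this]

end Insertion

section Removal

variable {d : ι → ℕ} {η : ι → ι} {i u v a b : ι}

/-- The condition `T (X i) ⊆ X (η i)` is not vacuous, but it is implied by the same condition at
another position. -/
structure IsRedundant (d : ι → ℕ) (η : ι → ι) (i : ι) : Prop where
  pos : 0 < d i
  lt : d i < d (η i)
  exists_le : ∃ j ≠ i, d i ≤ d j ∧ d (η j) ≤ d (η i)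

theorem exists_isRedundant [Finite ι] (hd : ∀ i, d i ≤ d (η i))
    (h : ¬∀ i, d i = 0 ∨ d (η i) ≤ d i) : ∃ i, IsRedundant d η i := by
  obtain ⟨i, hi, hmax⟩ := Set.exists_max_image {i | 0 < d i ∧ d i < d (η i)} d (Set.toFinite _)
    (by push Not at h; exact h.imp fun i hi => ⟨Nat.pos_of_ne_zero hi.1, hi.2⟩)
  have hηi : d (η (η i)) ≤ d (η i) := by
    by_contra! hlt
    exact (hmax (η i) ⟨hi.1.trans hi.2, hlt⟩).not_gt hi.2
  exact ⟨i, hi.1, hi.2, η i, fun h => hi.2.ne (by rw [h]), hd i, hηi⟩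

theorem exists_isGap [Finite ι] (hu : ∃ t ≠ i, d t ≤ d i) (hv : ∃ t ≠ i, d i ≤ d t) :
    ∃ u v, IsGap d i u v ∧ (∀ t ≠ i, d t ≤ d i → d t ≤ d u) ∧ ∀ t ≠ i, d i ≤ d t → d v ≤ d t := by
  obtain ⟨u, hu, hmax⟩ := Set.exists_max_image {t | t ≠ i ∧ d t ≤ d i} d (Set.toFinite _) hu
  obtain ⟨v, hv, hmin⟩ := Set.exists_min_image {t | t ≠ i ∧ d i ≤ d t} d (Set.toFinite _) hv
  exact ⟨u, v, ⟨hu.1, hv.1, hu.2, hv.2, fun t ht => (le_total (d t) (d i)).imp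
    (fun h => hmax t ⟨ht, h⟩) fun h => hmin t ⟨ht, h⟩⟩,
    fun t ht h => hmax t ⟨ht, h⟩, fun t ht h => hmin t ⟨ht, h⟩⟩

/-- Either position `i` has to contain no image `T (X s)`, or its dimension is determined by its
neighbours. -/
def IsFree (d : ι → ℕ) (η : ι → ι) (i u v : ι) : Prop :=
  ∀ s ≠ i, η s = i → d s = 0 ∨ d v ≤ d u

/-- Among the images `T (X s)`, position `i` has to contain only `T (X a)`, where `b` is the
position preceding `a`, and `T (X b)` is contained in `X u`. -/
structure IsConstrained (d : ι → ℕ) (η : ι → ι) (i u a b : ι) : Prop where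
  left_ne : b ≠ i
  right_ne : a ≠ i
  map_right : η a = i
  eq_or_eq_zero : ∀ s ≠ i, η s = i → s = a ∨ d s = 0
  left_le_right : d b ≤ d a
  right_lt : d a < d i
  right_le : d a ≤ d u
  le_or_le : ∀ t ≠ i, d t ≤ d b ∨ d a ≤ d t
  map_left : d b = 0 ∨ η b ≠ i ∧ d (η b) ≤ d u

theorem exists_isConstrained [Finite ι] (hd : ∀ i, d i ≤ d (η i)) (hz : ∃ z, d z = 0)
    (hmin : ∀ s, IsRedundant d η s → d i ≤ d s)
    (hu : ∀ t ≠ i, d t ≤ d i → d t ≤ d u) (hv : ∀ t ≠ i, d i ≤ d t → d v ≤ d t)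
    (hfree : ¬IsFree d η i u v) : ∃ a b, IsConstrained d η i u a b := by
  have hmin' {s j : ι} (hs : 0 < d s) (hsi : d s < d i) (hηs : d s < d (η s)) (hjs : j ≠ s)
      (hsj : d s ≤ d j) (hj : d (η j) ≤ d (η s)) : False :=
    (hmin s ⟨hs, hηs, j, hjs, hsj, hj⟩).not_gt hsi
  obtain ⟨a, hai, hηa, ha, huv⟩ : ∃ a ≠ i, η a = i ∧ d a ≠ 0 ∧ d u < d v := by
    simpa only [IsFree, not_forall, not_or, not_le, exists_prop] using hfree
  have hlt {t : ι} (hti : t ≠ i) (hηt : η t = i) : d t < d i :=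
    (hηt ▸ hd t).lt_of_ne fun h => ((hv t hti h.ge).trans (hu t hti h.le)).not_gt huv
  have hai' := hlt hai hηa
  have hunique (s : ι) (hsi : s ≠ i) (hηs : η s = i) : s = a ∨ d s = 0 := by
    by_contra! hs
    have hsi' := hlt hsi hηs
    rcases le_total (d s) (d a) with h | h
    · exact hmin' (Nat.pos_of_ne_zero hs.2) hsi' (hηs.symm ▸ hsi') hs.1.symm h (by rw [hηa, hηs])
    · exact hmin' (Nat.pos_of_ne_zero ha) hai' (hηa.symm ▸ hai') hs.1 h (by rw [hηa, hηs])
  obtain ⟨b, hb, hbmax⟩ := Set.exists_max_image {t | d t < d a} d (Set.toFinite _)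
    (hz.imp fun z hz => hz.trans_lt (Nat.pos_of_ne_zero ha))
  have hba : d b < d a := hb
  have hab : a ≠ b := fun h => hba.ne (by rw [h])
  refine ⟨a, b, fun h => (h ▸ hba.trans hai').false, hai, hηa, hunique, hba.le, hai',
    hu a hai hai'.le, fun t _ => (lt_or_ge (d t) (d a)).imp_left (hbmax t), ?_⟩
  by_contra! hcon
  obtain ⟨hb0, hηb⟩ := hcon
  have hbi : η b ≠ i := fun h => (hunique b (fun h => (h ▸ hba.trans hai').false) h).elim
    hab.symm hb0
  have hib : d i < d (η b) := by
    by_contra! h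
    exact (hu _ hbi h).not_gt (hηb hbi)
  exact hmin' (Nat.pos_of_ne_zero hb0) (hba.trans hai') (hba.trans (hai'.trans hib)) hab hba.le
    (hηa ▸ hib.le)

variable [DecidableEq ι]

/-- Position `i` of a Hessenberg flag lies between `u` and `v`, and the condition on `T (X i)` is
implied by a condition on the other positions. -/
structure IsRemovable (d : ι → ℕ) (η : ι → ι) (i u v : ι) : Prop extends IsGap d i u v where
  map_ne : η i ≠ i
  exists_le : ∃ j ≠ i, d v ≤ d j ∧ d (redirect η i v j) ≤ d (η i)

theorem redirect_ne (hv : v ≠ i) (s : ι) : redirect η i v s ≠ i := by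
  rw [redirect]
  split_ifs with h
  exacts [hv, h]

theorem IsRedundant.isRemovable (hi : IsRedundant d η i) (hgap : IsGap d i u v)
    (hv : ∀ t ≠ i, d i ≤ d t → d v ≤ d t) : IsRemovable d η i u v := by
  obtain ⟨j, hji, hij, hj⟩ := hi.exists_le
  have hηi : η i ≠ i := fun h => hi.lt.ne (by rw [h])
  refine ⟨hgap, hηi, j, hji, hv j hji hij, ?_⟩
  rw [redirect]
  split_ifs with h
  exacts [hv _ hηi hi.lt.le, hj]

theorem IsConstrained.isGap_update (h : IsConstrained d η i u a b) {k : ℕ} (hk : k ≤ d a - d b) :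
    IsGap (update d i (d b + k)) i b a where
  left_ne := h.left_ne
  right_ne := h.right_ne
  left_le := by simp [h.left_ne]
  le_right := by
    have := h.left_le_right
    rw [update_self, update_of_ne h.right_ne]
    omega
  le_or_le t ht := by simpa [ht, h.left_ne, h.right_ne] using h.le_or_le t ht

theorem update_le_update_redirect {n : ℕ} (hd : ∀ i, d i ≤ d (η i)) (hv : v ≠ i) (hiv : d i ≤ d v)
    {s : ι} (hs : s ≠ i) : update d i n s ≤ update d i n (redirect η i v s) := by
  rw [update_of_ne hs, update_of_ne (redirect_ne hv s), redirect]
  split_ifs with h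
  exacts [(h ▸ hd s).trans hiv, hd s]

end Removal

section Counting

variable {T : V →ₗ[F] V} {d : ι → ℕ} {η η₀ : ι → ι} {i u v a b : ι} {Y : ι → Submodule F V}

theorem finrank_sup_map [FiniteDimensional F V] (T : V →ₗ[F] V) (A B : Submodule F V) :
    finrank F ↥(B ⊔ A.map T) + finrank F ↥(A ⊓ B.comap T) = finrank F B + finrank F A := by
  have hA := LinearMap.finrank_range_add_finrank_ker ((B.mkQ ∘ₗ T).domRestrict A)
  rw [LinearMap.range_domRestrict, LinearMap.ker_domRestrict, LinearMap.ker_comp,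
    Submodule.ker_mkQ, Submodule.map_comp, ← Submodule.finrank_map_subtype_eq,
    Submodule.map_comap_subtype] at hA
  have hsup := LinearMap.finrank_range_add_finrank_ker (B.mkQ.domRestrict (B ⊔ A.map T))
  rw [LinearMap.range_domRestrict, LinearMap.ker_domRestrict, Submodule.ker_mkQ, Submodule.map_sup,
    (Submodule.comapSubtypeEquivOfLe (le_sup_left : B ≤ B ⊔ A.map T)).finrank_eq,
    Submodule.mkQ_map_self, bot_sup_eq] at hsup
  omega

theorem card_insertions_of_le_iff [FiniteDimensional F V] {P Q : Submodule F V}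
    (hP : ∀ D, P ≤ D ↔ Y u ≤ D ∧ ∀ s ≠ i, η s = i → (Y s).map T ≤ D)
    (hQ : ∀ D, D ≤ Q ↔ D ≤ Y v ∧ D.map T ≤ Y (η i)) (hPQ : P ≤ Q) :
    Nat.card (insertions T d η i u v Y) = if finrank F P ≤ d i then
      gaussBinom F (finrank F Q - finrank F P) (d i - finrank F P) else 0 := by
  have hmem (D : Submodule F V) :
      D ∈ insertions T d η i u v Y ↔ P ≤ D ∧ D ≤ Q ∧ finrank F D = d i := by
    rw [hP, hQ]
    exact ⟨fun ⟨h₁, h₂, h₃, h₄, h₅⟩ => ⟨⟨h₁, h₄⟩, ⟨h₂, h₅⟩, h₃⟩,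
      fun ⟨⟨h₁, h₄⟩, ⟨h₂, h₅⟩, h₃⟩ => ⟨h₁, h₂, h₃, h₄, h₅⟩⟩
  rw [Nat.card_congr (Equiv.subtypeEquivRight hmem)]
  split_ifs with h
  · exact card_submodule_Icc hPQ h
  · have : IsEmpty {D : Submodule F V // P ≤ D ∧ D ≤ Q ∧ finrank F D = d i} :=
      ⟨fun D => h (D.2.2.2 ▸ Submodule.finrank_mono D.2.1)⟩
    exact Nat.card_of_isEmpty

variable [DecidableEq ι]

theorem le_of_mem_hessenbergFlags_update {n : ℕ} (hY : Y ∈ hessenbergFlags T (update d i n) η₀)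
    {s t : ι} (hs : s ≠ i) (ht : t ≠ i) (hst : d s ≤ d t) : Y s ≤ Y t :=
  hY.2.1 s t (by rwa [update_of_ne hs, update_of_ne ht])

theorem IsRemovable.map_le (h : IsRemovable d η i u v) {n : ℕ}
    (hY : Y ∈ hessenbergFlags T (update d i n) (redirect η i v)) : (Y v).map T ≤ Y (η i) := by
  obtain ⟨j, hji, hvj, hj⟩ := h.exists_le
  exact (Submodule.map_mono (le_of_mem_hessenbergFlags_update hY h.right_ne hji hvj)).trans
    ((hY.2.2 j).trans
      (le_of_mem_hessenbergFlags_update hY (redirect_ne h.right_ne j) h.map_ne hj))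

theorem map_le_of_mem_hessenbergFlags_redirect {n : ℕ} {s : ι} (hs : η s = i)
    (hY : Y ∈ hessenbergFlags T (update d i n) (redirect η i v)) : (Y s).map T ≤ Y v := by
  simpa only [redirect, hs, if_true] using hY.2.2 s

theorem finrank_eq_of_mem_hessenbergFlags_update {n : ℕ} {s : ι}
    (hY : Y ∈ hessenbergFlags T (update d i n) η₀) (hs : s ≠ i) : finrank F (Y s) = d s := by
  rw [hY.1, update_of_ne hs]

theorem IsRemovable.card_insertions_of_isFree [FiniteDimensional F V] (h : IsRemovable d η i u v)
    (hfree : IsFree d η i u v)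
    (hY : Y ∈ hessenbergFlags T (update d i 0) (redirect η i v)) :
    Nat.card (insertions T d η i u v Y) = gaussBinom F (d v - d u) (d i - d u) := by
  have huv : Y u ≤ Y v := le_of_mem_hessenbergFlags_update hY h.left_ne h.right_ne
    (h.left_le.trans h.le_right)
  rw [card_insertions_of_le_iff (P := Y u) (Q := Y v)
    (fun D => ⟨fun hD => ⟨hD, fun s hs hηs => ?_⟩, And.left⟩)
    (fun D => ⟨fun hD => ⟨hD, (Submodule.map_mono hD).trans (h.map_le hY)⟩, And.left⟩) huv,
    finrank_eq_of_mem_hessenbergFlags_update hY h.left_ne,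
    finrank_eq_of_mem_hessenbergFlags_update hY h.right_ne, if_pos h.left_le]
  rcases hfree s hs hηs with h0 | hvu
  · rw [eq_bot_of_mem_hessenbergFlags hY (by rwa [update_of_ne hs]), Submodule.map_bot]
    exact bot_le
  · exact (map_le_of_mem_hessenbergFlags_redirect hηs hY).trans
      ((le_of_mem_hessenbergFlags_update hY h.right_ne h.left_ne hvu).trans hD)

theorem IsConstrained.card_insertions [FiniteDimensional F V] (h : IsConstrained d η i u a b)
    (hi : IsRemovable d η i u v) (hY : Y ∈ hessenbergFlags T (update d i 0) (redirect η i v)) :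
    Nat.card (insertions T d η i u v Y) =
      if d u + d a - finrank F ↥(Y a ⊓ (Y u).comap T) ≤ d i then
        gaussBinom F (d v - (d u + d a - finrank F ↥(Y a ⊓ (Y u).comap T)))
          (d i - (d u + d a - finrank F ↥(Y a ⊓ (Y u).comap T))) else 0 := by
  have huv : Y u ≤ Y v := le_of_mem_hessenbergFlags_update hY hi.left_ne hi.right_ne
    (hi.left_le.trans hi.le_right)
  have hsup : finrank F ↥(Y u ⊔ (Y a).map T) =
      d u + d a - finrank F ↥(Y a ⊓ (Y u).comap T) := by
    rw [← finrank_eq_of_mem_hessenbergFlags_update hY hi.left_ne,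
      ← finrank_eq_of_mem_hessenbergFlags_update hY h.right_ne, ← finrank_sup_map,
      Nat.add_sub_cancel_right]
  rw [card_insertions_of_le_iff (P := Y u ⊔ (Y a).map T) (Q := Y v) (fun D => ?_)
    (fun D => ⟨fun hD => ⟨hD, (Submodule.map_mono hD).trans (hi.map_le hY)⟩, And.left⟩)
    (sup_le huv (map_le_of_mem_hessenbergFlags_redirect h.map_right hY)), hsup,
    finrank_eq_of_mem_hessenbergFlags_update hY hi.right_ne]
  rw [sup_le_iff]
  refine and_congr_right fun _ => ⟨fun hD s hs hηs => ?_, fun hD => hD a h.right_ne h.map_right⟩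
  rcases h.eq_or_eq_zero s hs hηs with rfl | h0
  · exact hD
  · rw [eq_bot_of_mem_hessenbergFlags hY (by rwa [update_of_ne hs]), Submodule.map_bot]
    exact bot_le

theorem IsConstrained.le_inf_comap [FiniteDimensional F V] (h : IsConstrained d η i u a b)
    (hu : u ≠ i) (hY : Y ∈ hessenbergFlags T (update d i 0) (redirect η i v)) :
    Y b ≤ Y a ⊓ (Y u).comap T := by
  refine le_inf (le_of_mem_hessenbergFlags_update hY h.left_ne h.right_ne h.left_le_right)
    (Submodule.map_le_iff_le_comap.1 ?_)
  rcases h.map_left with h0 | ⟨hηb, hb⟩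
  · rw [eq_bot_of_mem_hessenbergFlags hY (by rwa [update_of_ne h.left_ne]), Submodule.map_bot]
    exact bot_le
  · refine le_trans ?_ (le_of_mem_hessenbergFlags_update hY hηb hu hb)
    simpa only [redirect, hηb, if_false] using hY.2.2 b

theorem IsConstrained.card_insertions_update [FiniteDimensional F V] {k : ℕ}
    (h : IsConstrained d η i u a b) (hi : IsRemovable d η i u v)
    (hY : Y ∈ hessenbergFlags T (update d i 0) (redirect η i v)) :
    Nat.card (insertions T (update d i (d b + k)) (update (redirect η i v) i u) i b a Y) =
      gaussBinom F (finrank F ↥(Y a ⊓ (Y u).comap T) - d b) k := by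
  rw [card_insertions_of_le_iff (P := Y b) (Q := Y a ⊓ (Y u).comap T)
    (fun D => ⟨fun hD => ⟨hD, fun s hs hηs => ?_⟩, And.left⟩)
    (fun D => by rw [update_self, le_inf_iff, Submodule.map_le_iff_le_comap])
    (h.le_inf_comap hi.left_ne hY), update_self,
    finrank_eq_of_mem_hessenbergFlags_update hY h.left_ne, if_pos (Nat.le_add_right _ _),
    Nat.add_sub_cancel_left]
  rw [update_of_ne hs] at hηs
  exact absurd hηs (redirect_ne hi.right_ne s)

end Counting

section Polynomiality

variable {Ω : Type*} {F V : Ω → Type*} [∀ ω, Field (F ω)] [∀ ω, Finite (F ω)]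
  [∀ ω, AddCommGroup (V ω)] [∀ ω, Module (F ω) (V ω)] [∀ ω, Finite (V ω)]
  {T : ∀ ω, V ω →ₗ[F ω] V ω} {d : ι → ℕ} {η : ι → ι} {i u v a b : ι}
  [Finite ι]

section DecidableEq

variable [DecidableEq ι]

theorem IsRemovable.hasPolynomialCard_of_isFree (h : IsRemovable d η i u v)
    (hfree : IsFree d η i u v) (hrec : HasPolynomialCard (fun ω => Nat.card (F ω))
      fun ω => hessenbergFlags (T ω) (update d i 0) (redirect η i v)) :
    HasPolynomialCard (fun ω => Nat.card (F ω)) fun ω => hessenbergFlags (T ω) d η := by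
  refine mem_polynomialsIn_congr (mul_mem hrec
    (gaussBinom_mem_polynomialsIn F (d v - d u) (d i - d u))) fun ω => ?_
  have := Fintype.ofFinite (hessenbergFlags (T ω) (update d i 0) (redirect η i v))
  rw [card_hessenbergFlags_eq_sum h.toIsGap h.map_ne rfl fun _ _ => rfl,
    Finset.sum_congr rfl fun Y _ => h.card_insertions_of_isFree hfree Y.2]
  simp

theorem IsConstrained.hasPolynomialCard (h : IsConstrained d η i u a b)
    (hi : IsRemovable d η i u v)
    (hrec : ∀ k ≤ d a - d b, HasPolynomialCard (fun ω => Nat.card (F ω)) fun ω =>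
      hessenbergFlags (T ω) (update d i (d b + k)) (update (redirect η i v) i u)) :
    HasPolynomialCard (fun ω => Nat.card (F ω)) fun ω => hessenbergFlags (T ω) d η := by
  have (ω : Ω) := Fintype.ofFinite (hessenbergFlags (T ω) (update d i 0) (redirect η i v))
  let δ : ∀ ω, hessenbergFlags (T ω) (update d i 0) (redirect η i v) → ℕ := fun ω Y =>
    finrank (F ω) ↥(Y.1 a ⊓ (Y.1 u).comap (T ω))
  have hle (ω Y) : d b ≤ δ ω Y := by
    rw [← finrank_eq_of_mem_hessenbergFlags_update Y.2 h.left_ne]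
    exact Submodule.finrank_mono (h.le_inf_comap hi.left_ne Y.2)
  have hge (ω Y) : δ ω Y ≤ d a := by
    rw [← finrank_eq_of_mem_hessenbergFlags_update Y.2 h.right_ne]
    exact Submodule.finrank_mono inf_le_left
  refine mem_polynomialsIn_congr (sum_prod_mem_polynomialsIn F (κ := Unit)
    (φ := fun ω Y _ => δ ω Y - d b) (m := fun _ => d a - d b + 1)
    (g := fun _ n ω => ((if d u + d a - (d b + n) ≤ d i then gaussBinom (F ω)
      (d v - (d u + d a - (d b + n))) (d i - (d u + d a - (d b + n))) else 0 : ℕ) : ℚ))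
    (fun ω Y _ => ?_) (fun k hk => ?_) fun _ n => ?_) fun ω => ?_
  · have := hge ω Y
    omega
  · have hk : k () ≤ d a - d b := Nat.lt_succ_iff.1 (hk ())
    refine mem_polynomialsIn_congr (hrec (k ()) hk) fun ω => ?_
    rw [card_hessenbergFlags_eq_sum (h.isGap_update hk) (by simpa using hi.left_ne)
      (update_idem ..).symm (η₀ := redirect η i v) fun s hs => ?_, Nat.cast_sum]
    · refine Finset.sum_congr rfl fun Y _ => ?_
      rw [h.card_insertions_update hi Y.2, Finset.univ_unique, Finset.prod_singleton]
    · rw [eq_comm, redirect, update_of_ne hs, if_neg (redirect_ne hi.right_ne s)]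
  · split_ifs
    exacts [gaussBinom_mem_polynomialsIn F _ _,
      mem_polynomialsIn_congr (zero_mem _) fun _ => Nat.cast_zero.symm]
  · rw [card_hessenbergFlags_eq_sum hi.toIsGap hi.map_ne rfl fun _ _ => rfl, Nat.cast_sum]
    refine Finset.sum_congr rfl fun Y _ => ?_
    simp only [Finset.univ_unique, Finset.prod_singleton]
    rw [h.card_insertions hi Y.2, Nat.add_sub_cancel' (hle ω Y)]

end DecidableEq

theorem hasPolynomialCard_hessenbergFlags
    (hbase : ∀ d : ι → ℕ, HasPolynomialCard (fun ω => Nat.card (F ω)) fun ω =>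
      hessenbergFlags (T ω) d id)
    {d : ι → ℕ} {η : ι → ι} (hd : ∀ i, d i ≤ d (η i)) (hz : ∃ z, d z = 0) :
    HasPolynomialCard (fun ω => Nat.card (F ω)) fun ω => hessenbergFlags (T ω) d η := by
  classical
  have := Fintype.ofFinite ι
  induction hn : ∑ i, d i using Nat.strong_induction_on generalizing d η with | _ n ih
  subst hn
  by_cases htriv : ∀ i, d i = 0 ∨ d (η i) ≤ d i
  · simpa only [hessenbergFlags_eq_id hd htriv] using hbase d
  obtain ⟨i, hi, hmin⟩ := Set.exists_min_image {i | IsRedundant d η i} d (Set.toFinite _)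
    (exists_isRedundant hd htriv)
  obtain ⟨z, hz0⟩ := hz
  have hzi : z ≠ i := fun h => hi.pos.ne' (h ▸ hz0)
  obtain ⟨j, hji, hij, -⟩ := hi.exists_le
  obtain ⟨u, v, hgap, hu, hv⟩ := exists_isGap ⟨z, hzi, hz0.le.trans (Nat.zero_le _)⟩ ⟨j, hji, hij⟩
  have hrem := hi.isRemovable hgap hv
  have hz' (n : ℕ) : ∃ z, update d i n z = 0 := ⟨z, by rwa [update_of_ne hzi]⟩
  by_cases hfree : IsFree d η i u v
  · refine hrem.hasPolynomialCard_of_isFree hfree (ih _ (sum_update_lt hi.pos) (fun s => ?_)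
      (hz' 0) rfl)
    rcases eq_or_ne s i with rfl | hs
    · simp
    · exact update_le_update_redirect hd hgap.right_ne hgap.le_right hs
  obtain ⟨a, b, hcon⟩ := exists_isConstrained hd ⟨z, hz0⟩ hmin hu hv hfree
  refine hcon.hasPolynomialCard hrem fun k hk => ?_
  have hbk : d b + k ≤ d a := by
    have := hcon.left_le_right
    omega
  refine ih _ (sum_update_lt (hbk.trans_lt hcon.right_lt)) (fun s => ?_) (hz' _) rfl
  rcases eq_or_ne s i with rfl | hs
  · simpa [hgap.left_ne] using hbk.trans hcon.right_le
  · rw [update_of_ne hs (f := redirect η i v)]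
    exact update_le_update_redirect hd hgap.right_ne hgap.le_right hs

end Polynomiality

end HessenbergFlags

/-! ### Torsion modules over `F[X]` -/

section TorsionBy

open Submodule

variable {R M N : Type*} [CommRing R] [AddCommGroup M] [Module R M] [AddCommGroup N] [Module R N]

theorem card_torsionBy_congr (e : M ≃ₗ[R] N) (a : R) :
    Nat.card (torsionBy R M a) = Nat.card (torsionBy R N a) :=
  Nat.card_congr (e.toEquiv.subtypeEquiv fun z => by simp [← map_smul])

theorem card_torsionBy_pi {ι : Type*} [Fintype ι] (A : ι → Type*) [∀ i, AddCommGroup (A i)]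
    [∀ i, Module R (A i)] (a : R) :
    Nat.card (torsionBy R (∀ i, A i) a) = ∏ i, Nat.card (torsionBy R (A i) a) := by
  rw [← Nat.card_pi]
  exact Nat.card_congr ((Equiv.subtypeEquivRight fun _ => funext_iff).trans
    (Equiv.subtypePiEquivPi (p := fun i z => z ∈ torsionBy R (A i) a)))

theorem card_linearMap_pi {ι : Type*} [Fintype ι] (A : ι → Type*) [∀ i, AddCommGroup (A i)]
    [∀ i, Module R (A i)] :
    Nat.card ((∀ i, A i) →ₗ[R] M) = ∏ i, Nat.card (A i →ₗ[R] M) := by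
  classical
  rw [← Nat.card_pi]
  exact (Nat.card_congr (LinearMap.lsum R A R (M := M)).toEquiv).symm

theorem card_linearMap_quotient_span (a : R) :
    Nat.card ((R ⧸ Ideal.span {a}) →ₗ[R] M) = Nat.card (torsionBy R M a) := by
  refine Nat.card_congr ⟨fun φ => ⟨φ (Submodule.Quotient.mk 1), ?_⟩, fun z =>
    liftQSpanSingleton a (LinearMap.toSpanSingleton R M z) z.2, fun φ => ?_, fun z => ?_⟩
  · rw [mem_torsionBy_iff, ← map_smul, ← Submodule.Quotient.mk_smul, smul_eq_mul, mul_one,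
      (Submodule.Quotient.mk_eq_zero _).2 (Ideal.mem_span_singleton_self a), map_zero]
  · apply linearMap_qext
    ext
    exact one_smul R _
  · exact Subtype.ext (one_smul R z.1)

theorem card_torsionBy_eq_card_quotient [Finite M] (a : R) :
    Nat.card (torsionBy R M a) =
      Nat.card (M ⧸ LinearMap.range (DistribSMul.toLinearMap R M a)) := by
  set φ := DistribSMul.toLinearMap R M a
  have hker : Nat.card M = Nat.card (LinearMap.range φ) * Nat.card (LinearMap.ker φ) := by
    rw [card_eq_card_quotient_mul_card (LinearMap.ker φ),
      Nat.card_congr φ.quotKerEquivRange.toEquiv, mul_comm]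
  exact Nat.eq_of_mul_eq_mul_left Nat.card_pos
    (hker.symm.trans (card_eq_card_quotient_mul_card (LinearMap.range φ)))

theorem card_torsionBy_quotient_span {a : R} [Finite (R ⧸ Ideal.span {a})] (b : R) :
    Nat.card (torsionBy R (R ⧸ Ideal.span {a}) b) =
      Nat.card (R ⧸ Ideal.span {a} ⊔ Ideal.span {b}) := by
  have hrange : LinearMap.range (DistribSMul.toLinearMap R (R ⧸ Ideal.span {a}) b) =
      Submodule.map (mkQ (Ideal.span {a})) (Ideal.span {b}) := by
    refine SetLike.ext fun z => ?_
    simp only [LinearMap.mem_range, mem_map, Ideal.mem_span_singleton']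
    constructor
    · rintro ⟨y, rfl⟩
      obtain ⟨c, rfl⟩ := Submodule.Quotient.mk_surjective _ y
      exact ⟨c * b, ⟨c, rfl⟩, by rw [mul_comm]; rfl⟩
    · rintro ⟨_, ⟨c, rfl⟩, rfl⟩
      exact ⟨Submodule.Quotient.mk c, by rw [mul_comm]; rfl⟩
  rw [card_torsionBy_eq_card_quotient, hrange]
  exact Nat.card_congr (quotientQuotientEquivQuotientSup _ _).toEquiv

end TorsionBy

section TorsionDim

variable {κ : Type*} (deg : κ → ℕ)

/-- The dimension of the `F[X]`-module `⨁ F[X] ⧸ (p i ^ a)`, where the sum is over the pairs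
`(i, a)` in `s` and `p i` has degree `deg i`. -/
def typeDim (s : Multiset (κ × ℕ+)) : ℕ :=
  (s.map fun z => deg z.1 * z.2).sum

theorem finite_typeDim_le [Finite κ] (hdeg : ∀ i, 0 < deg i) (n : ℕ) :
    {s | typeDim deg s ≤ n}.Finite := by
  classical
  have := Fintype.ofFinite κ
  refine (Set.finite_Iic (n • (Finset.univ ×ˢ Finset.Iic n.succPNat).val)).subset fun s hs => ?_
  refine Multiset.le_iff_count.2 fun z => ?_
  by_cases hz : z ∈ s
  · have hle : s.count z * (deg z.1 * z.2) ≤ n := by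
      obtain ⟨t, ht⟩ := Multiset.le_iff_exists_add.1
        (Multiset.le_count_iff_replicate_le.1 (le_refl (s.count z)))
      refine le_trans ?_ (ht ▸ hs : typeDim deg (Multiset.replicate (s.count z) z + t) ≤ n)
      simp [typeDim]
    have hcount : s.count z ≤ n :=
      (Nat.le_mul_of_pos_right _ (Nat.mul_pos (hdeg _) z.2.pos)).trans hle
    have hsize : z.2 ≤ n.succPNat := PNat.coe_le_coe _ _ |>.1 <|
      (Nat.le_mul_of_pos_left _ (Nat.mul_pos (Multiset.count_pos.2 hz) (hdeg z.1))).trans <| by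
        rw [mul_assoc]; exact hle.trans n.le_succ
    rw [Multiset.count_nsmul, Multiset.count_eq_one_of_mem (Finset.nodup _) (by simpa using hsize),
      mul_one]
    exact hcount
  · simp [Multiset.count_eq_zero_of_notMem hz]

variable [DecidableEq κ]

/-- The dimension of the kernel of `p i ^ j` on the `F[X]`-module `⨁ F[X] ⧸ (p i ^ a)`, where the
sum is over the pairs `(i, a)` in `s` and `p i` has degree `deg i`. -/
def torsionDim (i : κ) (j : ℕ) (s : Multiset (κ × ℕ+)) : ℕ :=
  (s.map fun z => if z.1 = i then deg i * min j z.2 else 0).sum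

theorem torsionDim_add_torsionDim (i : κ) (n : ℕ) (s : Multiset (κ × ℕ+)) :
    torsionDim deg i n s + torsionDim deg i (n + 2) s + deg i * s.count (i, n.succPNat) =
      2 * torsionDim deg i (n + 1) s := by
  induction s using Multiset.induction_on with
  | empty => simp [torsionDim]
  | cons z s ih =>
    have hz : (if z.1 = i then deg i * min n z.2 else 0) +
        (if z.1 = i then deg i * min (n + 2) z.2 else 0) +
          deg i * (if (i, n.succPNat) = z then 1 else 0) =
        2 * if z.1 = i then deg i * min (n + 1) z.2 else 0 := by
      obtain ⟨k, a⟩ := z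
      rcases eq_or_ne k i with rfl | hk
      · have ha : n.succPNat = a ↔ n + 1 = (a : ℕ) := by simp [← PNat.coe_inj]
        simp only [if_true, ← mul_add, Nat.mul_left_comm 2, Prod.mk.injEq, true_and, ha]
        congr 1
        split_ifs <;> omega
      · simp [hk, hk.symm]
    simp only [torsionDim, Multiset.map_cons, Multiset.sum_cons, Multiset.count_cons] at ih ⊢
    linarith

variable {deg}

theorem eq_of_forall_torsionDim_eq (hdeg : ∀ i, 0 < deg i) {s t : Multiset (κ × ℕ+)}
    (h : ∀ i j, torsionDim deg i j s = torsionDim deg i j t) : s = t := by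
  refine Multiset.ext.2 fun ⟨i, a⟩ => Nat.eq_of_mul_eq_mul_left (hdeg i) ?_
  have hs := torsionDim_add_torsionDim deg i a.natPred s
  have ht := torsionDim_add_torsionDim deg i a.natPred t
  rw [h, h, h, ← ht, PNat.succPNat_natPred] at hs
  exact Nat.add_left_cancel hs

end TorsionDim

section TorsionModel

open Polynomial Submodule

theorem prod_toType_pow {α : Type*} [DecidableEq α] (q : ℕ) (s : Multiset α) (f : α → ℕ) :
    ∏ z : s, q ^ f z.1 = q ^ (s.map f).sum := by
  rw [Finset.prod_pow_eq_pow_sum, Finset.sum, Multiset.map_univ]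

theorem finite_quotient_span {F : Type*} [Field F] [Finite F] {f : F[X]} (hf : f ≠ 0) :
    Finite (F[X] ⧸ Ideal.span {f}) :=
  have : Module.Finite F (F[X] ⧸ Ideal.span {f}) := (AdjoinRoot.powerBasis hf).finite
  Module.finite_of_finite F

theorem card_quotient_span {F : Type*} [Field F] {f : F[X]} (hf : f ≠ 0) :
    Nat.card (F[X] ⧸ Ideal.span {f}) = Nat.card F ^ f.natDegree := by
  have : Module.Finite F (F[X] ⧸ Ideal.span {f}) := (AdjoinRoot.powerBasis hf).finite
  rw [Module.natCard_eq_pow_finrank (K := F), finrank_quotient_span_eq_natDegree]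

/-- The polynomials `p i` are irreducible of degree `deg i` and pairwise non-associated. -/
structure IsPrimeFamily {F κ : Type*} [Field F] (p : κ → F[X]) (deg : κ → ℕ) : Prop where
  irreducible : ∀ i, Irreducible (p i)
  isCoprime : ∀ i j, i ≠ j → IsCoprime (p i) (p j)
  natDegree_eq : ∀ i, (p i).natDegree = deg i

/-- The module `⨁ R ⧸ (p i ^ a)`, where the sum is over the pairs `(i, a)` in `s`. -/
abbrev TorsionModel {R κ : Type*} [CommRing R] [DecidableEq κ] (p : κ → R)
    (s : Multiset (κ × ℕ+)) : Type _ :=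
  ∀ z : s, R ⧸ Ideal.span {p z.1.1 ^ (z.1.2 : ℕ)}

variable {F κ : Type*} [Field F] {p : κ → F[X]} {deg : κ → ℕ}

namespace IsPrimeFamily

variable (hp : IsPrimeFamily p deg)
include hp

theorem prime_pow_ne_zero (i : κ) (n : ℕ) : p i ^ n ≠ 0 :=
  pow_ne_zero n (hp.irreducible i).ne_zero

theorem deg_pos (i : κ) : 0 < deg i :=
  hp.natDegree_eq i ▸ (hp.irreducible i).natDegree_pos

theorem natDegree_prime_pow (i : κ) (n : ℕ) : (p i ^ n).natDegree = deg i * n := by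
  rw [natDegree_pow, hp.natDegree_eq, mul_comm]

variable [DecidableEq κ]

theorem card_torsionModel (s : Multiset (κ × ℕ+)) :
    Nat.card (TorsionModel p s) = Nat.card F ^ typeDim deg s := by
  simp only [Nat.card_pi, card_quotient_span (hp.prime_pow_ne_zero _ _), hp.natDegree_prime_pow]
  exact prod_toType_pow _ s fun z => deg z.1 * z.2

variable [Finite F]

theorem finite_torsionModel (s : Multiset (κ × ℕ+)) : Finite (TorsionModel p s) :=
  have (z : s) := finite_quotient_span (hp.prime_pow_ne_zero z.1.1 z.1.2)
  Pi.finite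

theorem card_torsionBy_quotient (i k : κ) (j a : ℕ) :
    Nat.card (torsionBy F[X] (F[X] ⧸ Ideal.span {p k ^ a}) (p i ^ j)) =
      Nat.card F ^ if k = i then deg i * min j a else 0 := by
  have := finite_quotient_span (hp.prime_pow_ne_zero k a)
  rw [card_torsionBy_quotient_span]
  split_ifs with hk
  · subst hk
    have span_le {m n : ℕ} (h : m ≤ n) : Ideal.span {p k ^ n} ≤ Ideal.span {p k ^ m} :=
      Ideal.span_singleton_le_span_singleton.2 (pow_dvd_pow _ h)
    rw [← hp.natDegree_prime_pow, ← card_quotient_span (hp.prime_pow_ne_zero _ _)]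
    rcases le_total j a with h | h
    · rw [min_eq_left h, sup_eq_right.2 (span_le h)]
    · rw [min_eq_right h, sup_eq_left.2 (span_le h)]
  · rw [Ideal.sup_eq_top_iff_isCoprime _ _ |>.2 (hp.isCoprime k i hk).pow, pow_zero]
    exact Nat.card_unique

theorem card_torsionBy_torsionModel (i : κ) (j : ℕ) (s : Multiset (κ × ℕ+)) :
    Nat.card (torsionBy F[X] (TorsionModel p s) (p i ^ j)) =
      Nat.card F ^ torsionDim deg i j s := by
  rw [card_torsionBy_pi]
  simp only [hp.card_torsionBy_quotient]
  exact prod_toType_pow _ s fun z => if z.1 = i then deg i * min j z.2 else 0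

theorem card_linearMap_torsionModel (s t : Multiset (κ × ℕ+)) :
    Nat.card (TorsionModel p s →ₗ[F[X]] TorsionModel p t) =
      Nat.card F ^ (s.map fun z => torsionDim deg z.1 z.2 t).sum := by
  rw [card_linearMap_pi]
  simp only [card_linearMap_quotient_span, hp.card_torsionBy_torsionModel]
  exact prod_toType_pow _ s fun z => torsionDim deg z.1 z.2 t

theorem eq_of_torsionModel_equiv {s t : Multiset (κ × ℕ+)}
    (e : TorsionModel p s ≃ₗ[F[X]] TorsionModel p t) : s = t :=
  eq_of_forall_torsionDim_eq hp.deg_pos fun i j =>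
    Nat.pow_right_injective (Nat.succ_le_of_lt (Finite.one_lt_card (α := F))) <| by
      simp only [← hp.card_torsionBy_torsionModel, card_torsionBy_congr e]

end IsPrimeFamily

end TorsionModel

section TorsionPrimes

open Polynomial Submodule

theorem module_isTorsion_of_finite (R M : Type*) [CommRing R] [IsDomain R] [Infinite R]
    [AddCommGroup M] [Module R M] [Finite M] : Module.IsTorsion R M := by
  intro x
  obtain ⟨r, s, hne, h⟩ := Finite.exists_ne_map_eq_of_infinite fun r : R => r • x
  exact ⟨⟨r - s, mem_nonZeroDivisors_of_ne_zero (sub_ne_zero.2 hne)⟩,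
    (sub_smul r s x).trans (sub_eq_zero.2 h)⟩

theorem nonempty_pi_equiv_pi_subtype {R ι : Type*} [Ring R] (A : ι → Type*)
    [∀ i, AddCommGroup (A i)] [∀ i, Module R (A i)] (P : ι → Prop)
    (h : ∀ i, ¬ P i → Subsingleton (A i)) :
    Nonempty ((∀ i, A i) ≃ₗ[R] ∀ i : {i // P i}, A i) := by
  classical
  refine ⟨LinearEquiv.ofBijective (LinearMap.pi fun i => LinearMap.proj i.1)
    ⟨fun x y hxy => funext fun i => ?_, fun y => ⟨fun i => if hi : P i then y ⟨i, hi⟩ else 0, ?_⟩⟩⟩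
  · by_cases hi : P i
    · exact congrFun hxy ⟨i, hi⟩
    · exact (h i hi).elim _ _
  · ext i
    simp [i.2]

theorem exists_toType_equiv {ι α : Type*} [Finite ι] [DecidableEq α] (f : ι → α) :
    ∃ (s : Multiset α) (e : ι ≃ s), ∀ i, (e i).1 = f i := by
  classical
  have := Fintype.ofFinite ι
  let s := (Finset.univ : Finset ι).val.map f
  have hcard (x : α) : Fintype.card {i // f i = x} = s.count x := by
    simp only [s, Multiset.count_map, Fintype.card_subtype, Finset.card_def, Finset.filter_val,
      eq_comm]
  exact ⟨s, (Equiv.sigmaFiberEquiv f).symm.trans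
    (Equiv.sigmaCongrRight fun x => Fintype.equivFinOfCardEq (hcard x)), fun _ => rfl⟩

variable {R M N κ : Type*} [CommRing R] [AddCommGroup M] [Module R M] [AddCommGroup N] [Module R N]

/-- The irreducible elements of `R` that annihilate a non-zero element of `M` are, up to associates,
among the `p i`. -/
def HasTorsionPrimes (p : κ → R) (M : Type*) [AddCommGroup M] [Module R M] : Prop :=
  ∀ π, Irreducible π → ∀ z : M, z ≠ 0 → π • z = 0 → ∃ i, Associated π (p i)

theorem HasTorsionPrimes.of_injective {p : κ → R} (h : HasTorsionPrimes p N) {f : M →ₗ[R] N}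
    (hf : Function.Injective f) : HasTorsionPrimes p M :=
  fun π hπ z hz hπz => h π hπ (f z) ((map_ne_zero_iff f hf).2 hz) <| by
    rw [← map_smul, hπz, map_zero]

variable {F : Type*} [Field F] {p : κ → F[X]}

theorem exists_associated_of_hasTorsionPrimes {π : F[X]} (hπ : Irreducible π) {e : ℕ}
    (he : e ≠ 0) (h : HasTorsionPrimes p (F[X] ⧸ Ideal.span {π ^ e})) :
    ∃ k, Associated π (p k) := by
  obtain ⟨n, rfl⟩ := Nat.exists_eq_succ_of_ne_zero he
  refine h π hπ (Ideal.Quotient.mk _ (π ^ n)) ?_ ?_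
  · rw [Ne, Ideal.Quotient.eq_zero_iff_dvd, pow_dvd_pow_iff hπ.ne_zero hπ.not_isUnit]
    exact n.not_succ_le_self
  · exact (Ideal.Quotient.eq_zero_iff_dvd _ _).2 (pow_succ' π n).dvd

variable [DecidableEq κ]

theorem exists_torsionModel_equiv_pi {ι : Type*} [Finite ι] {π : ι → F[X]} {e : ι → ℕ}
    (he : ∀ i, e i ≠ 0) (h : ∀ i, ∃ k, Associated (π i) (p k)) :
    ∃ s, Nonempty (TorsionModel p s ≃ₗ[F[X]] ∀ i, F[X] ⧸ Ideal.span {π i ^ e i}) := by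
  have := Fintype.ofFinite ι
  choose k hk using h
  obtain ⟨s, φ, hφ⟩ := exists_toType_equiv fun i => (k i, (⟨e i, (he i).bot_lt⟩ : ℕ+))
  have hspan (i : ι) :
      Ideal.span {p (φ i).1.1 ^ ((φ i).1.2 : ℕ)} = Ideal.span {π i ^ e i} := by
    rw [hφ]
    exact Ideal.span_singleton_eq_span_singleton.2 (hk i).symm.pow_pow
  exact ⟨s, ⟨(LinearEquiv.piCongrLeft F[X] _ φ).symm.trans
    (LinearEquiv.piCongrRight fun i => quotEquivOfEq _ _ (hspan i))⟩⟩

theorem exists_torsionModel_equiv {M : Type*} [AddCommGroup M] [Module F[X] M] [Finite M]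
    (h : HasTorsionPrimes p M) : ∃ s, Nonempty (TorsionModel p s ≃ₗ[F[X]] M) := by
  classical
  obtain ⟨ι, _, π, hπ, e, ⟨E⟩⟩ := Module.equiv_directSum_of_isTorsion
    (module_isTorsion_of_finite F[X] M)
  let A (i : ι) : Type _ := F[X] ⧸ Ideal.span {π i ^ e i}
  let E₁ : M ≃ₗ[F[X]] ∀ i, A i := E.trans (DirectSum.linearEquivFunOnFintype F[X] ι A)
  obtain ⟨E₂⟩ := nonempty_pi_equiv_pi_subtype (R := F[X]) A (fun i => e i ≠ 0) fun i hi => by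
    rw [not_not] at hi
    simp only [A, hi, pow_zero, Ideal.span_singleton_one]
    infer_instance
  obtain ⟨s, ⟨E₃⟩⟩ := exists_torsionModel_equiv_pi (p := p) (e := fun i : {i // e i ≠ 0} => e i)
    (fun i => i.2) fun i => exists_associated_of_hasTorsionPrimes (hπ i) i.2
    (h.of_injective (f := E₁.symm.toLinearMap ∘ₗ LinearMap.single F[X] A i)
      (E₁.symm.injective.comp (Pi.single_injective (M := A) _)))
  exact ⟨s, ⟨E₃.trans (E₁.trans E₂).symm⟩⟩

variable {deg : κ → ℕ}

namespace IsPrimeFamily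

theorem hasTorsionPrimes_torsionModel (hp : IsPrimeFamily p deg) (s : Multiset (κ × ℕ+)) :
    HasTorsionPrimes p (TorsionModel p s) := by
  intro π hπ z hz hπz
  obtain ⟨x, hx⟩ := Function.ne_iff.1 hz
  refine ⟨x.1.1, ?_⟩
  by_contra h
  obtain ⟨c, hc⟩ := Ideal.Quotient.mk_surjective (z x)
  have hcop : IsCoprime (p x.1.1 ^ (x.1.2 : ℕ)) π := by
    refine IsCoprime.pow_left ?_
    rw [(hp.irreducible _).coprime_iff_not_dvd]
    exact fun hd => h ((hp.irreducible _).associated_of_dvd hπ hd).symm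
  have hπx : Ideal.Quotient.mk (Ideal.span {p x.1.1 ^ (x.1.2 : ℕ)}) (π * c) = 0 :=
    (congrArg (π • ·) hc).trans (congrFun hπz x)
  rw [Ideal.Quotient.eq_zero_iff_dvd] at hπx
  exact hx (hc ▸ (Ideal.Quotient.eq_zero_iff_dvd _ _).2 (hcop.dvd_of_dvd_mul_left hπx))

theorem isHallFamily {Ω : Type*} {F : Ω → Type*} [∀ ω, Field (F ω)]
    [∀ ω, Finite (F ω)] [Finite κ] {p : ∀ ω, κ → (F ω)[X]} (hdeg : ∀ i, 0 < deg i)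
    (hp : ∀ ω, IsPrimeFamily (p ω) deg) :
    IsHallFamily (fun ω => Nat.card (F ω)) (fun ω => (F ω)[X]) (fun ω s => TorsionModel (p ω) s)
      (typeDim deg) where
  one_lt ω := Finite.one_lt_card
  card_eq ω := (hp ω).card_torsionModel
  finite_size_le := finite_typeDim_le deg hdeg
  existsUnique_equiv ω s W := by
    have := (hp ω).finite_torsionModel s
    obtain ⟨t, ⟨e⟩⟩ := exists_torsionModel_equiv
      (((hp ω).hasTorsionPrimes_torsionModel s).of_injective W.injective_subtype)
    exact ⟨t, ⟨e⟩, fun t' ⟨e'⟩ => (hp ω).eq_of_torsionModel_equiv (e'.trans e.symm)⟩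
  linearMap s t := by
    simp only [HasPolynomialCard, (hp _).card_linearMap_torsionModel, Nat.cast_pow]
    exact pow_mem natCast_mem_polynomialsIn _

end IsPrimeFamily

end TorsionPrimes

/-! ### Operators of a given similarity class type -/

section Operators

open Polynomial Module

section InvariantFlags

variable {F V ι : Type*} [Field F] [AddCommGroup V] [Module F V]

theorem card_mapSubmodule [Finite F] [Finite V] (T : V →ₗ[F] V)
    (W : (Algebra.lsmul F F V T).invtSubmodule) :
    Nat.card (AEval.mapSubmodule F V T W) = Nat.card F ^ finrank F W.1 := by
  rw [← Module.natCard_eq_pow_finrank]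
  exact Nat.card_congr (AEval.equiv_mapSubmodule T W.1 W.2).symm.toEquiv

/-- The subspaces invariant under `T` are the `F[X]`-submodules of `V`. -/
noncomputable def hessenbergFlagsIdEquiv [Finite F] [Finite V] (T : V →ₗ[F] V) (d : ι → ℕ) :
    hessenbergFlags T d id ≃ submoduleFlags F[X] (AEval' T) (Nat.card F) d where
  toFun X := ⟨fun i =>
      AEval.mapSubmodule F V T ⟨X.1 i, Submodule.map_le_iff_le_comap.1 (X.2.2.2 i)⟩,
    fun i => (card_mapSubmodule T _).trans (by rw [X.2.1 i]),
    fun i j hij => (AEval.mapSubmodule F V T).monotone (X.2.2.1 i j hij)⟩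
  invFun Y := ⟨fun i => ((AEval.mapSubmodule F V T).symm (Y.1 i)).1,
    fun i => Nat.pow_right_injective (Finite.one_lt_card (α := F)) <| by
      simp only [← card_mapSubmodule, OrderIso.apply_symm_apply, Y.2.1 i],
    fun i j hij => (AEval.mapSubmodule F V T).symm.monotone (Y.2.2 i j hij),
    fun i => Submodule.map_le_iff_le_comap.2 ((AEval.mapSubmodule F V T).symm (Y.1 i)).2⟩
  left_inv X := by simp
  right_inv Y := Subtype.ext (funext fun i => (AEval.mapSubmodule F V T).apply_symm_apply (Y.1 i))

end InvariantFlags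

section SimilarityClassType

/-- The similarity class type `τ` as a multiset of pairs (element of `τ`, part of its partition). -/
def typeParts (τ : Multiset (ℕ × Multiset ℕ)) : Multiset (τ × ℕ+) :=
  Finset.univ.val.bind fun z : τ => z.1.2.map fun a => (z, Nat.toPNat' a)

theorem torsionDim_typeParts {τ : Multiset (ℕ × Multiset ℕ)} [DecidableEq τ]
    (hτ : ∀ z : τ, ∀ a ∈ z.1.2, 0 < a) (z : τ) (j : ℕ) :
    torsionDim (fun z : τ => z.1.1) z j (typeParts τ) =
      z.1.1 * (z.1.2.map fun a => min a j).sum := by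
  rw [torsionDim, typeParts, Multiset.map_bind, Multiset.sum_bind]
  change ∑ x : τ, _ = _
  rw [Finset.sum_eq_single z]
  · rw [Multiset.map_map, ← Multiset.sum_map_mul_left]
    refine congrArg _ (Multiset.map_congr rfl fun a ha => ?_)
    simp [hτ z a ha, min_comm]
  · intro x _ hx
    simp [hx]
  · simp

theorem toType_fst_injective {α : Type*} [DecidableEq α] {s : Multiset α} (hs : s.Nodup) :
    Function.Injective fun x : s => x.1 := by
  rintro ⟨x, i⟩ ⟨y, j⟩ (rfl : x = y)
  have hx := Multiset.nodup_iff_count_le_one.1 hs x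
  exact congrArg _ (Fin.ext (by omega))

variable {F V : Type*} [Field F] [AddCommGroup V] [Module F V] {T : V →ₗ[F] V}

theorem smul_eq_zero_iff_mem_ker (f : F[X]) (z : AEval' T) :
    f • z = 0 ↔ (AEval'.of T).symm z ∈ LinearMap.ker (aeval T f) := by
  rw [LinearMap.mem_ker, ← LinearEquiv.map_eq_zero_iff (AEval'.of T).symm]
  exact Iff.of_eq (congrArg (· = 0) (AEval.of_symm_smul (a := T) f z))

theorem card_torsionBy_AEval' [Finite F] [Finite V] (f : F[X]) :
    Nat.card (Submodule.torsionBy F[X] (AEval' T) f) =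
      Nat.card F ^ finrank F (LinearMap.ker (aeval T f)) := by
  rw [← Module.natCard_eq_pow_finrank]
  exact Nat.card_congr ((AEval'.of T).symm.toEquiv.subtypeEquiv fun z =>
    smul_eq_zero_iff_mem_ker f z)

variable {τ : Multiset (ℕ × Multiset ℕ)}

theorem HasType.exists_primes (h : HasType τ T) :
    ∃ p : τ → F[X], Function.Injective p ∧
      (∀ z, (p z).Monic ∧ Irreducible (p z) ∧ (p z).natDegree = z.1.1) ∧
      (∀ z : τ, ∀ a ∈ z.1.2, 0 < a) ∧
      (∀ z j, finrank F (LinearMap.ker (aeval T (p z ^ j))) =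
        z.1.1 * (z.1.2.map fun a => min a j).sum) ∧
      ∀ π, π.Monic → Irreducible π → π ∉ Set.range p → LinearMap.ker (aeval T π) = ⊥ := by
  classical
  obtain ⟨s, lam, hs, hpos, rfl, hker, hbot⟩ := h
  let e := Multiset.mapEquiv s.val fun p => (p.natDegree, lam p)
  have hmem (z) : (e.symm z).1 ∈ s := Multiset.coe_mem
  have hval (z) : z.1 = ((e.symm z).1.natDegree, lam (e.symm z).1) := by
    exact (congrArg Sigma.fst (e.apply_symm_apply z)).symm.trans
      (Multiset.mapEquiv_apply s.val _ (e.symm z))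
  refine ⟨fun z => (e.symm z).1,
    fun _ _ hxy => e.symm.injective (toType_fst_injective s.nodup hxy),
    fun z => ⟨(hs _ (hmem z)).1, (hs _ (hmem z)).2, ?_⟩, fun z => ?_, fun z j => ?_,
    fun π hmon hirr hπ => hbot π hmon hirr fun hπs => hπ ?_⟩
  · rw [hval]
  · rw [hval]
    exact hpos _ (hmem z)
  · rw [hval]
    exact hker _ (hmem z) j
  · have hcount : 0 < s.val.count π := Multiset.count_pos.2 hπs
    exact ⟨e ⟨π, 0, hcount⟩, congrArg Sigma.fst (e.symm_apply_apply ⟨π, 0, hcount⟩)⟩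

theorem isPrimeFamily_of_monic {κ : Type*} {p : κ → F[X]} {deg : κ → ℕ}
    (hinj : Function.Injective p)
    (hp : ∀ i, (p i).Monic ∧ Irreducible (p i) ∧ (p i).natDegree = deg i) :
    IsPrimeFamily p deg where
  irreducible i := (hp i).2.1
  isCoprime i j hij := by
    rw [(hp i).2.1.coprime_iff_not_dvd]
    exact fun hd => hij (hinj (eq_of_monic_of_associated (hp i).1 (hp j).1
      ((hp i).2.1.associated_of_dvd (hp j).2.1 hd)))
  natDegree_eq i := (hp i).2.2

theorem hasTorsionPrimes_of_ker_eq_bot {κ : Type*} {p : κ → F[X]}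
    (h : ∀ π, π.Monic → Irreducible π → π ∉ Set.range p → LinearMap.ker (aeval T π) = ⊥) :
    HasTorsionPrimes p (AEval' T) := by
  intro π hπ z hz hπz
  have hassoc : Associated π (π * C π.leadingCoeff⁻¹) :=
    associated_mul_unit_right _ _
      (isUnit_C.2 (inv_ne_zero (leadingCoeff_ne_zero.2 hπ.ne_zero)).isUnit)
  suffices hrange : π * C π.leadingCoeff⁻¹ ∈ Set.range p by
    obtain ⟨i, hi⟩ := hrange
    exact ⟨i, hi ▸ hassoc⟩
  by_contra hrange
  have hmem : (π * C π.leadingCoeff⁻¹) • z = 0 := by rw [mul_comm, mul_smul, hπz, smul_zero]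
  rw [smul_eq_zero_iff_mem_ker, h _ (monic_mul_leadingCoeff_inv hπ.ne_zero)
    (hassoc.irreducible hπ) hrange, Submodule.mem_bot, LinearEquiv.map_eq_zero_iff] at hmem
  exact hz hmem

open Classical in
theorem HasType.exists_model [Finite F] [Finite V] (h : HasType τ T) :
    ∃ p : τ → F[X], IsPrimeFamily p (fun z => z.1.1) ∧
      Nonempty (TorsionModel p (typeParts τ) ≃ₗ[F[X]] AEval' T) := by
  obtain ⟨p, hinj, hp, hpos, hker, hbot⟩ := h.exists_primes
  have hprime := isPrimeFamily_of_monic hinj hp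
  have : Finite (AEval' T) := Finite.of_equiv V (AEval'.of T).toEquiv
  obtain ⟨s, ⟨e⟩⟩ := exists_torsionModel_equiv (hasTorsionPrimes_of_ker_eq_bot hbot)
  suffices hs : s = typeParts τ from ⟨p, hprime, ⟨hs ▸ e⟩⟩
  refine eq_of_forall_torsionDim_eq hprime.deg_pos fun z j =>
    Nat.pow_right_injective (Finite.one_lt_card (α := F)) ?_
  simp only [← hprime.card_torsionBy_torsionModel, torsionDim_typeParts hpos]
  rw [card_torsionBy_congr e, card_torsionBy_AEval', hker]

theorem HasType.finrank_eq [Finite F] [Finite V] (h : HasType τ T) :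
    finrank F V = typeDim (fun z : τ => z.1.1) (typeParts τ) := by
  classical
  obtain ⟨p, hp, ⟨e⟩⟩ := h.exists_model
  refine Nat.pow_right_injective (Finite.one_lt_card (α := F)) ?_
  simp only [← hp.card_torsionModel, ← Module.natCard_eq_pow_finrank]
  exact Nat.card_congr ((AEval'.of T).toEquiv.trans e.symm.toEquiv)

theorem hasPolynomialCard_hessenbergFlags_id {Ω ι : Type*} [Finite ι] {F V : Ω → Type*}
    [∀ ω, Field (F ω)] [∀ ω, Finite (F ω)] [∀ ω, AddCommGroup (V ω)] [∀ ω, Module (F ω) (V ω)]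
    [∀ ω, Finite (V ω)] {T : ∀ ω, V ω →ₗ[F ω] V ω} (hT : ∀ ω, HasType τ (T ω)) (d : ι → ℕ) :
    HasPolynomialCard (fun ω => Nat.card (F ω)) fun ω => hessenbergFlags (T ω) d id := by
  classical
  choose p hp e using fun ω => (hT ω).exists_model
  rcases isEmpty_or_nonempty Ω with hΩ | ⟨⟨ω₀⟩⟩
  · exact ⟨0, funext hΩ.elim⟩
  have hHall := IsPrimeFamily.isHallFamily (hp ω₀).deg_pos hp
  refine mem_polynomialsIn_congr
    (hHall.hasPolynomialCard_submoduleFlags d (typeParts τ)) fun ω => ?_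
  obtain ⟨e⟩ := e ω
  rw [Nat.card_congr (hessenbergFlagsIdEquiv (T ω) d), card_submoduleFlags_congr e]

end SimilarityClassType

end Operators

/-! ### Tuples of subspaces as Hessenberg flags -/

section Tuples

open Module Sum

section NextOrBot

variable {α : Type*} [LE α] [OrderBot α] {r : ℕ}

/-- The entry following `W i`, with `⊥` following the last entry. -/
def nextOrBot (W : Fin r → α) (i : Fin r) : α :=
  if h : (i : ℕ) + 1 < r then W ⟨i + 1, h⟩ else ⊥

theorem nextOrBot_le_iff {W : Fin r → α} {i : Fin r} {x : α} :
    nextOrBot W i ≤ x ↔ ∀ h : (i : ℕ) + 1 < r, W ⟨i + 1, h⟩ ≤ x := by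
  unfold nextOrBot
  split_ifs with h <;> simp [h]

end NextOrBot

theorem le_of_lt_of_nextOrBot_le {α : Type*} [Preorder α] [OrderBot α] {r : ℕ} {W U : Fin r → α}
    (hWU : ∀ i, nextOrBot W i ≤ U i) (hUW : ∀ i, U i ≤ W i) {i j : Fin r} (hij : i < j) :
    W j ≤ U i := by
  obtain ⟨j, hj⟩ := j
  induction j with
  | zero => exact absurd hij (Nat.not_lt_zero _)
  | succ j ih =>
    have hstep (k : Fin r) (h : (k : ℕ) + 1 < r) : W ⟨k + 1, h⟩ ≤ U k :=
      nextOrBot_le_iff.1 (hWU k) h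
    rcases Nat.lt_succ_iff_lt_or_eq.1 hij with hij | hij
    · exact (hstep ⟨j, by omega⟩ hj).trans ((hUW _).trans (ih _ hij))
    · subst hij
      exact hstep i hj

variable {F V : Type*} [Field F] [AddCommGroup V] [Module F V] {r : ℕ}
  {T : V →ₗ[F] V} {A c : Fin r → ℕ} {W U : Fin r → Submodule F V}

theorem finrank_nextOrBot (hW : ∀ i, finrank F (W i) = A i) (i : Fin r) :
    finrank F ↥(nextOrBot W i : Submodule F V) = nextOrBot A i := by
  by_cases h : (i : ℕ) + 1 < r
  · rw [nextOrBot, nextOrBot, dif_pos h, dif_pos h, hW]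
  · rw [nextOrBot, nextOrBot, dif_neg h, dif_neg h, finrank_bot, Nat.bot_eq_zero]

/-- The tuples of subspaces of dimensions `A` satisfying `W i ⊇ W (i + 1) + T W (i + 1)`. -/
def chainSet (T : V →ₗ[F] V) (A : Fin r → ℕ) : Set (Fin r → Submodule F V) :=
  {W | (∀ i, finrank F (W i) = A i) ∧ ∀ i, nextOrBot W i ≤ W i ⊓ (W i).comap T}

theorem mem_tupleSet_iff {a : Fin r → ℕ × ℕ} :
    W ∈ tupleSet T r a ↔ W ∈ chainSet T (fun i => (a i).1) ∧
      ∀ i, finrank F ↥(W i ⊓ (W i).comap T) = (a i).2 := by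
  simp only [tupleSet, pairSet, chainSet, Set.mem_ofPred_eq, forall_and, nextOrBot_le_iff,
    sup_le_iff, le_inf_iff, Submodule.map_le_iff_le_comap]
  tauto

section ChainFlag

/-- The dimensions of the flag formed by a tuple `W`, a tuple `U`, and `⊥`, `⊤`. -/
def chainDim (A c : Fin r → ℕ) (n : ℕ) : (Fin r ⊕ Fin r) ⊕ Bool → ℕ :=
  Sum.elim (Sum.elim A c) fun b => cond b n 0

/-- The Hessenberg function expressing `T (U i) ≤ W i`. -/
def chainHess : (Fin r ⊕ Fin r) ⊕ Bool → (Fin r ⊕ Fin r) ⊕ Bool :=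
  Sum.elim (Sum.elim (fun _ => inr true) fun i => inl (inl i)) inr

/-- The flag formed by the tuples `W` and `U`, together with `⊥` and `⊤`. -/
def chainFlag (W U : Fin r → Submodule F V) : (Fin r ⊕ Fin r) ⊕ Bool → Submodule F V :=
  Sum.elim (Sum.elim W U) fun b => cond b ⊤ ⊥

theorem chainFlag_total (hWU : ∀ i, nextOrBot W i ≤ U i) (hUW : ∀ i, U i ≤ W i)
    (x y : (Fin r ⊕ Fin r) ⊕ Bool) :
    chainFlag W U x ≤ chainFlag W U y ∨ chainFlag W U y ≤ chainFlag W U x := by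
  have lt {i j : Fin r} (hij : i < j) : W j ≤ U i := le_of_lt_of_nextOrBot_le hWU hUW hij
  have le {i j : Fin r} (hij : i ≤ j) : W j ≤ W i := by
    rcases hij.eq_or_lt with rfl | hij
    exacts [le_rfl, (lt hij).trans (hUW i)]
  have total (i j) : W i ≤ U j ∨ U j ≤ W i :=
    (lt_or_ge j i).imp lt fun hij => (hUW j).trans (le hij)
  rcases x with (i | i) | b
  · rcases y with (j | j) | b
    · exact (le_total j i).imp le le
    · exact total i j
    · cases b
      exacts [.inr bot_le, .inl le_top]
  · rcases y with (j | j) | b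
    · exact (total j i).symm
    · rcases lt_trichotomy i j with hij | rfl | hij
      exacts [.inr ((hUW j).trans (lt hij)), .inl le_rfl, .inl ((hUW i).trans (lt hij))]
    · cases b
      exacts [.inr bot_le, .inl le_top]
  · cases b
    exacts [.inl bot_le, .inr le_top]

theorem le_of_total_of_finrank_le [FiniteDimensional F V] {P Q : Submodule F V}
    (h : P ≤ Q ∨ Q ≤ P) (hd : finrank F P ≤ finrank F Q) : P ≤ Q :=
  h.elim id fun hQP => (Submodule.eq_of_le_of_finrank_le hQP hd).ge

theorem chainFlag_mem_hessenbergFlags_iff [FiniteDimensional F V]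
    (hAc : ∀ i, nextOrBot A i ≤ c i) (hcA : ∀ i, c i ≤ A i) :
    chainFlag W U ∈ hessenbergFlags T (chainDim A c (finrank F V)) chainHess ↔
      (∀ i, finrank F (W i) = A i) ∧ ∀ i, nextOrBot W i ≤ U i ∧ U i ≤ W i ⊓ (W i).comap T ∧
        finrank F (U i) = c i := by
  constructor
  · rintro ⟨hdim, hle, hmap⟩
    refine ⟨fun i => hdim (inl (inl i)), fun i => ⟨nextOrBot_le_iff.2 fun h =>
      hle (inl (inl _)) (inl (inr i)) (nextOrBot_le_iff.1 (hAc i) h),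
      le_inf (hle (inl (inr i)) (inl (inl i)) (hcA i))
        (Submodule.map_le_iff_le_comap.1 (hmap (inl (inr i)))), hdim (inl (inr i))⟩⟩
  · rintro ⟨hW, hU⟩
    have hdim (x) : finrank F (chainFlag W U x) = chainDim A c (finrank F V) x := by
      rcases x with (i | i) | _ | _
      exacts [hW i, (hU i).2.2, finrank_bot F V, finrank_top F V]
    refine ⟨hdim, fun x y hxy => ?_, ?_⟩
    · rw [← hdim, ← hdim] at hxy
      exact le_of_total_of_finrank_le (chainFlag_total (fun i => (hU i).1)
        (fun i => (hU i).2.1.trans inf_le_left) x y) hxy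
    · rintro ((i | i) | _ | _)
      · exact le_top
      · exact Submodule.map_le_iff_le_comap.2 ((hU i).2.1.trans inf_le_right)
      · exact (Submodule.map_bot T).le
      · exact le_top

theorem chainFlag_eq_of_mem [FiniteDimensional F V] {X : (Fin r ⊕ Fin r) ⊕ Bool → Submodule F V}
    (hX : X ∈ hessenbergFlags T (chainDim A c (finrank F V)) chainHess) :
    chainFlag (fun i => X (inl (inl i))) (fun i => X (inl (inr i))) = X := by
  funext x
  rcases x with (i | i) | _ | _
  · rfl
  · rfl
  · exact (Submodule.finrank_eq_zero.1 (hX.1 (inr false))).symm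
  · exact (Submodule.eq_top_of_finrank_eq (hX.1 (inr true))).symm

/-- A flag consists of a tuple `W` and, for each `i`, a subspace `U i` between `W (i + 1)` and
`W i ∩ T⁻¹ (W i)`. -/
def chainFlagsEquiv [FiniteDimensional F V] (T : V →ₗ[F] V) (hAc : ∀ i, nextOrBot A i ≤ c i)
    (hcA : ∀ i, c i ≤ A i) :
    hessenbergFlags T (chainDim A c (finrank F V)) chainHess ≃
      Σ W : chainSet T A, ∀ i, {U : Submodule F V //
        nextOrBot W.1 i ≤ U ∧ U ≤ W.1 i ⊓ (W.1 i).comap T ∧ finrank F U = c i} where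
  toFun X :=
    have hX := (chainFlag_mem_hessenbergFlags_iff hAc hcA).1 ((chainFlag_eq_of_mem X.2).symm ▸ X.2)
    ⟨⟨fun i => X.1 (inl (inl i)), hX.1, fun i => (hX.2 i).1.trans (hX.2 i).2.1⟩,
      fun i => ⟨X.1 (inl (inr i)), hX.2 i⟩⟩
  invFun Y := ⟨chainFlag Y.1 fun i => Y.2 i,
    (chainFlag_mem_hessenbergFlags_iff hAc hcA).2 ⟨Y.1.2.1, fun i => (Y.2 i).2⟩⟩
  left_inv X := Subtype.ext (chainFlag_eq_of_mem X.2)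
  right_inv _ := rfl

theorem card_chainFlags [Finite F] [Finite V] [Fintype (chainSet T A)]
    (hAc : ∀ i, nextOrBot A i ≤ c i) (hcA : ∀ i, c i ≤ A i) :
    Nat.card (hessenbergFlags T (chainDim A c (finrank F V)) chainHess) =
      ∑ W : chainSet T A, ∏ i, gaussBinom F
        (finrank F ↥(W.1 i ⊓ (W.1 i).comap T) - nextOrBot A i) (c i - nextOrBot A i) := by
  rw [Nat.card_congr (chainFlagsEquiv T hAc hcA), Nat.card_sigma]
  refine Finset.sum_congr rfl fun W _ => ?_
  rw [Nat.card_pi]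
  refine Finset.prod_congr rfl fun i _ => ?_
  rw [← finrank_nextOrBot W.2.1 i]
  refine card_submodule_Icc (W.2.2 i) ?_
  rw [finrank_nextOrBot W.2.1 i]
  exact hAc i

end ChainFlag

section Polynomiality

variable {Ω : Type*} {F V : Ω → Type*} [∀ ω, Field (F ω)] [∀ ω, Finite (F ω)]
  [∀ ω, AddCommGroup (V ω)] [∀ ω, Module (F ω) (V ω)] [∀ ω, Finite (V ω)]
  {T : ∀ ω, V ω →ₗ[F ω] V ω} {τ : Multiset (ℕ × Multiset ℕ)}

theorem hasPolynomialCard_chainFlags (hT : ∀ ω, HasType τ (T ω))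
    (hA : ∀ ω i, A i ≤ finrank (F ω) (V ω)) (hcA : ∀ i, c i ≤ A i) :
    HasPolynomialCard (fun ω => Nat.card (F ω)) fun ω =>
      hessenbergFlags (T ω) (chainDim A c (finrank (F ω) (V ω))) chainHess := by
  rcases isEmpty_or_nonempty Ω with hΩ | ⟨⟨ω₀⟩⟩
  · exact ⟨0, funext hΩ.elim⟩
  have hconst (ω) : finrank (F ω) (V ω) = finrank (F ω₀) (V ω₀) :=
    (hT ω).finrank_eq.trans (hT ω₀).finrank_eq.symm
  simp only [hconst]
  refine hasPolynomialCard_hessenbergFlags (hasPolynomialCard_hessenbergFlags_id hT) ?_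
    ⟨inr false, rfl⟩
  rintro ((i | i) | b)
  exacts [hA ω₀ i, hcA i, le_rfl]

theorem hasPolynomialCard_chainSet_fiber (hT : ∀ ω, HasType τ (T ω))
    (hA : ∀ ω i, A i ≤ finrank (F ω) (V ω)) (hanti : ∀ i, nextOrBot A i ≤ A i) (b : Fin r → ℕ) :
    HasPolynomialCard (fun ω => Nat.card (F ω)) fun ω =>
      {W : chainSet (T ω) A // ∀ i, finrank (F ω) ↥(W.1 i ⊓ (W.1 i).comap (T ω)) = b i} := by
  have (ω : Ω) := Fintype.ofFinite (chainSet (T ω) A)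
  let δ : ∀ ω, chainSet (T ω) A → Fin r → ℕ := fun ω W i =>
    finrank (F ω) ↥(W.1 i ⊓ (W.1 i).comap (T ω))
  have hge (ω W i) : nextOrBot A i ≤ δ ω W i := by
    rw [← finrank_nextOrBot W.2.1 i]
    exact Submodule.finrank_mono (W.2.2 i)
  have hle (ω W i) : δ ω W i ≤ A i := by
    rw [← W.2.1 i]
    exact Submodule.finrank_mono inf_le_left
  refine mem_polynomialsIn_congr (sum_prod_mem_polynomialsIn F (κ := Fin r)
    (φ := fun ω W i => δ ω W i - nextOrBot A i) (m := fun i => A i - nextOrBot A i + 1)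
    (g := fun i k _ => if nextOrBot A i + k = b i then 1 else 0)
    (fun ω W i => ?_) (fun k hk => ?_) fun i k => ?_) fun ω => ?_
  · exact Nat.lt_succ_of_le (Nat.sub_le_sub_right (hle ω W i) _)
  · have hcA (i : Fin r) : nextOrBot A i + k i ≤ A i := by
      have := hanti i
      have := hk i
      omega
    refine mem_polynomialsIn_congr (hasPolynomialCard_chainFlags hT hA hcA) fun ω => ?_
    simp only [card_chainFlags (fun _ => Nat.le_add_right _ _) hcA, Nat.cast_sum, Nat.cast_prod,
      Nat.add_sub_cancel_left, δ]
  · split_ifs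
    exacts [one_mem _, zero_mem _]
  · classical
    simp only [Nat.add_sub_of_le (hge ω _ _), Finset.prod_boole, Finset.sum_boole, Finset.mem_univ,
      true_imp_iff, Nat.card_eq_fintype_card, Fintype.card_subtype, δ]

theorem hasPolynomialCard_tupleSet (hT : ∀ ω, HasType τ (T ω)) (a : Fin r → ℕ × ℕ) :
    HasPolynomialCard (fun ω => Nat.card (F ω)) fun ω => tupleSet (T ω) r a := by
  by_cases hempty : ∀ ω, IsEmpty (tupleSet (T ω) r a)
  · simp only [HasPolynomialCard, Nat.card_of_isEmpty]
    exact zero_mem _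
  push Not at hempty
  obtain ⟨ω₀, ⟨W, hW⟩⟩ := hempty
  obtain ⟨⟨hdim, hnext⟩, -⟩ := mem_tupleSet_iff.1 hW
  have hA (ω i) : (a i).1 ≤ finrank (F ω) (V ω) := by
    rw [(hT ω).finrank_eq, ← (hT ω₀).finrank_eq]
    exact (hdim i).ge.trans (Submodule.finrank_le _)
  have hanti (i) : nextOrBot (fun i => (a i).1) i ≤ (a i).1 := by
    rw [← finrank_nextOrBot hdim]
    exact (Submodule.finrank_mono ((hnext i).trans inf_le_left)).trans (hdim i).le
  exact (hasPolynomialCard_chainSet_fiber hT hA hanti fun i => (a i).2).congr fun ω =>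
    (Equiv.subtypeSubtypeEquivSubtypeInter _ _).trans
      (Equiv.subtypeEquivRight fun _ => mem_tupleSet_iff.symm)

end Polynomiality

end Tuples

/-- An operator of similarity class type `τ` on a finite-dimensional space over a finite field. -/
structure OperatorOfType (τ : Multiset (ℕ × Multiset ℕ)) : Type 1 where
  {F V : Type}
  [field : Field F]
  [fintype : Fintype F]
  [addCommGroup : AddCommGroup V]
  [module : Module F V]
  [finiteDimensional : FiniteDimensional F V]
  T : V →ₗ[F] V
  hasType : HasType τ T

attribute [instance] OperatorOfType.field OperatorOfType.fintype OperatorOfType.addCommGroup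
  OperatorOfType.module OperatorOfType.finiteDimensional

/-- for a fixed similarity class type `τ` and fixed nonnegative integers
`a_{i,j}`, there is a polynomial `P` such that for every finite field `F_q` and every
operator `T` of type `τ` over `F_q`, `|[(a₁,₁,a₁,₂),…,(a_r,₁,a_r,₂)]_T| = P(q)`. -/
theorem tupleSet_ncard_polynomial (τ : Multiset (ℕ × Multiset ℕ))
    (r : ℕ) (a : Fin r → ℕ × ℕ) :
    ∃ P : Polynomial ℚ,
      ∀ (F : Type) (_ : Field F) (_ : Fintype F)
        (V : Type) (_ : AddCommGroup V) (_ : Module F V) (_ : FiniteDimensional F V)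
        (T : V →ₗ[F] V), HasType τ T →
          (Set.ncard (tupleSet T r a) : ℚ) = P.eval (Fintype.card F : ℚ) := by
  have (ω : OperatorOfType τ) : Finite ω.V := Module.finite_of_finite ω.F
  obtain ⟨P, hP⟩ := mem_polynomialsIn_iff.1
    (hasPolynomialCard_tupleSet (fun ω : OperatorOfType τ => ω.hasType) a)
  refine ⟨P, fun F _ _ V _ _ _ T hT => ?_⟩
  rw [← Nat.card_coe_set_eq, ← Nat.card_eq_fintype_card]
  exact hP ⟨T, hT⟩
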